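/- arXiv:1804.05919 — 3 statements merged into one kernel-verified Lean document; each statement's English description precedes it below -/
import Mathlib

section
/- Let I_1 ⊆ R_1 and I_2 ⊆ R_2 be square-free monomial ideals in polynomial rings over the same field K, each with μ minimal generators, such that H(I_1) = H(I_2) ∪ {F} for an edge F ∉ H(I_2) which is the union of two or more distinct edges of H(I_2). Then β_i(R_1/I_1) = β_i(R_2/I_2) for all i ≥ 0; in particular pd(R_1/I_1) = pd(R_2/I_2). -/
/-!
The total Betti numbers are computed from a variant of the Taylor resolution of `R/I`. Its degree
`k` part is free on *all* `k`-tuples `t` of generators (repetitions allowed, so no order or sign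
bookkeeping on subsets is needed), and the differential carries the basis vector of `t` to the
alternating sum over the tuples `s` obtained by deleting one entry, with coefficient
`lcm(t) / lcm(s)`. In each multidegree `b` this is the complex of all tuples of generators dividing
`x ^ b`, which is contracted by prepending one fixed such generator (`taylor_exact`).

Tensoring with `K` sends the coefficient `lcm(t) / lcm(s)` to `1` if `lcm(t)` divides `lcm(s)` and
to `0` otherwise, so `β_i(R/I)` is the dimension of the homology of a complex of `K`-vector spaces
that depends only on these divisibilities (`bettiNumber_eq`). The divisibility says that every edge
of the hypergraph meeting `t` meets `s` (`lcmSupp_subset_iff`), and for a union of edges this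
condition follows from the condition for its members.

That `Tor` may be computed from a flat resolution of the first argument
(`tor_succ_of_resolution`) is proved by dimension shifting, from the long exact sequence of the
complexes `- ⊗ P` with `P` a projective resolution of the second argument.
-/

open CategoryTheory

/-- The square-free monomial of `K[x₁,…,xₙ]` with support `m j`. -/
noncomputable def sqMonomial (K : Type) [Field K] {n μ : ℕ} (m : Fin μ → Finset (Fin n))
    (j : Fin μ) : MvPolynomial (Fin n) K := ∏ i ∈ m j, MvPolynomial.X i

/-- The square-free monomial ideal of `K[x₁,…,xₙ]` generated by the square-free
monomials with supports `m j`, `j = 1,…,μ`. -/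
noncomputable def sqIdeal (K : Type) [Field K] {n μ : ℕ} (m : Fin μ → Finset (Fin n)) :
    Ideal (MvPolynomial (Fin n) K) :=
  Ideal.span (Set.range (sqMonomial K m))

/-- The (dual) hypergraph attached to a family of square-free monomials of `K[x₁,…,xₙ]`
(encoded by their supports `m j ⊆ {x₁,…,xₙ}`): its edges are the nonempty sets
`{j : xᵢ divides m_j}`, `i = 1,…,n`. -/
def hgEdges {n μ : ℕ} (m : Fin μ → Finset (Fin n)) : Set (Finset (Fin μ)) :=
  {F | F.Nonempty ∧ ∃ i : Fin n, F = Finset.univ.filter (fun j => i ∈ m j)}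

/-- The `i`-th total Betti number `βᵢ(R/I) = dim_K Torᵢ^R(R/I, K)` of `R/I`, where
`R = K[x₁,…,xₙ]`, `K` is an `R`-module via evaluation of polynomials at `0`, and the
`K`-vector space structure on the Tor module is by restriction of scalars along
`K → R`. -/
noncomputable def bettiNumber (K : Type) [Field K] {n : ℕ}
    (I : Ideal (MvPolynomial (Fin n) K)) (i : ℕ) : Cardinal := by
  letI : Module (MvPolynomial (Fin n) K) K :=
    Module.compHom K (MvPolynomial.aeval (fun _ : Fin n => (0 : K))).toRingHom
  let M := ((Tor (ModuleCat (MvPolynomial (Fin n) K)) i).obj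
      (ModuleCat.of _ ((MvPolynomial (Fin n) K) ⧸ I))).obj (ModuleCat.of _ K)
  letI : Module K M := Module.compHom M (MvPolynomial.C : K →+* MvPolynomial (Fin n) K)
  exact Module.rank K M

/-- The projective dimension `pd(R/I) = max {i : βᵢ(R/I) ≠ 0}` of `R/I` as an
`R`-module, `R = K[x₁,…,xₙ]`. -/
noncomputable def pdim (K : Type) [Field K] {n : ℕ}
    (I : Ideal (MvPolynomial (Fin n) K)) : ℕ :=
  sSup {i : ℕ | bettiNumber K I i ≠ 0}

/-! ### The long exact sequence of Tor in the first variable -/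

section TorLES
open Limits MonoidalCategory
variable {R : Type} [CommRing R]

/-- The complex `M ⊗ P`, for a projective resolution `P` of `N`. Its homology is `Tor(M, N)`:
Mathlib's `Tor` is derived in the second variable. -/
noncomputable abbrev tcx {N : ModuleCat R} (P : ProjectiveResolution N) (M : ModuleCat R) :
    ChainComplex (ModuleCat R) ℕ :=
  (((tensoringLeft (ModuleCat R)).obj M).mapHomologicalComplex _).obj P.complex

/-- The chain map `M ⊗ P ⟶ M' ⊗ P` induced by `f : M ⟶ M'`. -/
noncomputable abbrev tcxMap {N : ModuleCat R} (P : ProjectiveResolution N) {M M' : ModuleCat R}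
    (f : M ⟶ M') : tcx P M ⟶ tcx P M' :=
  (NatTrans.mapHomologicalComplex ((tensoringLeft (ModuleCat R)).map f) _).app P.complex

/-- The complex of complexes `0 ⟶ S.X₁ ⊗ P ⟶ S.X₂ ⊗ P ⟶ S.X₃ ⊗ P ⟶ 0`. -/
noncomputable def tcxSES {N : ModuleCat R} (P : ProjectiveResolution N)
    (S : ShortComplex (ModuleCat R)) : ShortComplex (ChainComplex (ModuleCat R) ℕ) where
  X₁ := tcx P S.X₁
  X₂ := tcx P S.X₂
  X₃ := tcx P S.X₃
  f := tcxMap P S.f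
  g := tcxMap P S.g
  zero := by
    ext i : 1
    exact (MonoidalCategory.comp_whiskerRight S.f S.g (P.complex.X i)).symm.trans (by
      rw [S.zero]; exact MonoidalPreadditive.zero_whiskerRight)

lemma tcxSES_shortExact {N : ModuleCat R} (P : ProjectiveResolution N)
    {S : ShortComplex (ModuleCat R)} (hS : S.ShortExact) : (tcxSES P S).ShortExact := by
  apply HomologicalComplex.shortExact_of_degreewise_shortExact
  intro i
  have : Module.Projective R (P.complex.X i) :=
    (IsProjective.iff_projective (R := R) (P.complex.X i)).2 (P.projective i)
  exact hS.map_of_exact (tensorRight (P.complex.X i))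

/-- Flat modules have no higher `Tor`. -/
lemma tcx_isZero {N : ModuleCat R} (P : ProjectiveResolution N) (M : ModuleCat R)
    [Module.Flat R M] (n : ℕ) : IsZero ((tcx P M).homology (n + 1)) := by
  apply HomologicalComplex.ExactAt.isZero_homology
  rw [HomologicalComplex.exactAt_iff' _ (n + 2) (n + 1) n (by simp) (by simp)]
  have h := (ShortComplex.ShortExact.moduleCat_exact_iff_function_exact _).1 (P.exact_succ n)
  rw [ShortComplex.ShortExact.moduleCat_exact_iff_function_exact]
  exact Module.Flat.lTensor_exact M h

/-- Dimension shifting in the first variable: if `0 → X₁ → X₂ → X₃ → 0` is exact with `X₂` flat,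
the connecting map `Tor_{n+2}(X₃, N) → Tor_{n+1}(X₁, N)` of the long exact sequence is an
isomorphism. -/
lemma tor_shift {S : ShortComplex (ModuleCat R)} (hS : S.ShortExact) (N : ModuleCat R)
    [Module.Flat R S.X₂] (n : ℕ) :
    Nonempty (((Tor (ModuleCat R) (n + 2)).obj S.X₃).obj N ≅
      ((Tor (ModuleCat R) (n + 1)).obj S.X₁).obj N) := by
  let P := projectiveResolution N
  let e : (tcx P S.X₃).homology (n + 2) ≅ (tcx P S.X₁).homology (n + 1) :=
    (tcxSES_shortExact P hS).δIso (n + 2) (n + 1) (by simp)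
      (tcx_isZero P S.X₂ (n + 1)) (tcx_isZero P S.X₂ n)
  let e₁ : ((Tor (ModuleCat R) (n + 2)).obj S.X₃).obj N ≅ (tcx P S.X₃).homology (n + 2) :=
    P.isoLeftDerivedObj ((tensoringLeft (ModuleCat R)).obj S.X₃) (n + 2)
  let e₂ : ((Tor (ModuleCat R) (n + 1)).obj S.X₁).obj N ≅ (tcx P S.X₁).homology (n + 1) :=
    P.isoLeftDerivedObj ((tensoringLeft (ModuleCat R)).obj S.X₁) (n + 1)
  exact ⟨e₁ ≪≫ e ≪≫ e₂.symm⟩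

/-- The identification of `H₀(M ⊗ P)` with `M ⊗ N`, by right exactness of `M ⊗ -`. -/
noncomputable def tcxZero {N : ModuleCat R} (P : ProjectiveResolution N) (M : ModuleCat R) :
    (tcx P M).homology 0 ≅ M ⊗ N :=
  have : PreservesFiniteColimits ((tensoringLeft (ModuleCat R)).obj M) :=
    inferInstanceAs (PreservesFiniteColimits (tensorLeft M))
  (tcx P M).isoHomologyι₀ ≪≫
    asIso (P.fromLeftDerivedZero' ((tensoringLeft (ModuleCat R)).obj M))

lemma tcxZero_naturality {N : ModuleCat R} (P : ProjectiveResolution N) {M M' : ModuleCat R}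
    (f : M ⟶ M') : HomologicalComplex.homologyMap (tcxMap P f) 0 ≫ (tcxZero P M').hom =
      (tcxZero P M).hom ≫ f ▷ N := by
  have h : HomologicalComplex.opcyclesMap (tcxMap P f) 0 ≫
      P.fromLeftDerivedZero' ((tensoringLeft (ModuleCat R)).obj M') =
      P.fromLeftDerivedZero' ((tensoringLeft (ModuleCat R)).obj M) ≫ f ▷ N := by
    rw [← cancel_epi (HomologicalComplex.pOpcycles _ _),
      HomologicalComplex.p_opcyclesMap_assoc,
      ProjectiveResolution.pOpcycles_comp_fromLeftDerivedZero',
      ProjectiveResolution.pOpcycles_comp_fromLeftDerivedZero'_assoc]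
    exact (whisker_exchange f (P.π.f 0)).symm
  have h1 : HomologicalComplex.homologyMap (tcxMap P f) 0 ≫ (tcx P M').homologyι 0 =
    (tcx P M).homologyι 0 ≫ HomologicalComplex.opcyclesMap (tcxMap P f) 0 := by simp
  simp only [tcxZero, Iso.trans_hom, asIso_hom, HomologicalComplex.isoHomologyι_hom,
    Category.assoc]
  rw [← h, reassoc_of% h1]

lemma tor_zero (M N : ModuleCat R) :
    Nonempty (((Tor (ModuleCat R) 0).obj M).obj N ≅ M ⊗ N) :=
  ⟨(projectiveResolution N).isoLeftDerivedObj _ _ ≪≫ tcxZero _ M⟩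

/-- The bottom of the same long exact sequence: `Tor₁(X₃, N)` is the kernel of
`X₁ ⊗ N → X₂ ⊗ N`, embedded by the connecting map. -/
lemma tor_one {S : ShortComplex (ModuleCat R)} (hS : S.ShortExact) (N : ModuleCat R)
    [Module.Flat R S.X₂] :
    Nonempty (((Tor (ModuleCat R) 1).obj S.X₃).obj N ≃ₗ[R]
      LinearMap.ker (S.f.hom.rTensor N)) := by
  let P := projectiveResolution N
  have hP := tcxSES_shortExact P hS
  let δ : (tcx P S.X₃).homology 1 ⟶ (tcx P S.X₁).homology 0 := hP.δ 1 0 (by simp)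
  have hm : Mono δ := hP.mono_δ 1 0 (by simp) (tcx_isZero P S.X₂ 0)
  have hδ : δ ≫ HomologicalComplex.homologyMap (tcxMap P S.f) 0 = 0 := hP.δ_comp 1 0 (by simp)
  have hex : ∀ z, HomologicalComplex.homologyMap (tcxMap P S.f) 0 z = 0 → ∃ x, δ x = z :=
    (ShortComplex.moduleCat_exact_iff _).1 (hP.homology_exact₁ 1 0 (by simp))
  let e := tcxZero P S.X₁
  let e₂ := tcxZero P S.X₂
  have hnat : HomologicalComplex.homologyMap (tcxMap P S.f) 0 ≫ e₂.hom = e.hom ≫ S.f ▷ N :=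
    tcxZero_naturality P S.f
  let φ : (tcx P S.X₃).homology 1 ⟶ S.X₁ ⊗ N := δ ≫ e.hom
  have hφ : Function.Injective φ.hom := by
    rw [← ModuleCat.mono_iff_injective]
    exact mono_comp _ _
  have hr : LinearMap.range φ.hom = LinearMap.ker (S.f.hom.rTensor N) := by
    ext y
    constructor
    · rintro ⟨x, rfl⟩
      have : φ ≫ S.f ▷ N = 0 := by
        simp only [φ, Category.assoc]
        rw [← hnat, reassoc_of% hδ, zero_comp]
      exact ConcreteCategory.congr_hom this x
    · intro hy
      have h2 := ConcreteCategory.congr_hom hnat (e.inv y)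
      simp only [ModuleCat.comp_apply, Iso.inv_hom_id_apply] at h2
      have hi : Function.Injective e₂.hom.hom :=
        (ModuleCat.mono_iff_injective _).1 inferInstance
      obtain ⟨x, hx⟩ := hex (e.inv y) (hi (by
        refine h2.trans (Eq.trans ?_ (map_zero _).symm)
        exact hy))
      refine ⟨x, ?_⟩
      change e.hom (δ x) = y
      rw [hx]; simp
  let e₁ : ((Tor (ModuleCat R) 1).obj S.X₃).obj N ≅ (tcx P S.X₃).homology 1 :=
    P.isoLeftDerivedObj ((tensoringLeft (ModuleCat R)).obj S.X₃) 1
  exact ⟨e₁.toLinearEquiv ≪≫ₗ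
    LinearEquiv.ofInjective φ.hom hφ ≪≫ₗ LinearEquiv.ofEq _ _ hr⟩
end TorLES

/-! ### Tor from a flat resolution of the first argument -/

section Res
variable {R : Type} [CommRing R]

/-- If `φ` is onto, `ker ι` is the quotient of `A = ker (ι ∘ φ)` by `B = ker φ`. -/
lemma ker_equiv_quot {V W U : Type} [AddCommGroup V] [Module R V] [AddCommGroup W] [Module R W]
    [AddCommGroup U] [Module R U] (φ : V →ₗ[R] W) (hφ : Function.Surjective φ) (ι : W →ₗ[R] U)
    (A B : Submodule R V) (hA : ∀ x, x ∈ A ↔ ι (φ x) = 0) (hB : ∀ x, x ∈ B ↔ φ x = 0) :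
    Nonempty (LinearMap.ker ι ≃ₗ[R] A ⧸ B.submoduleOf A) := by
  let ψ : A →ₗ[R] LinearMap.ker ι :=
    LinearMap.codRestrict _ (φ ∘ₗ A.subtype) (fun x => (hA x).1 x.2)
  have hs : Function.Surjective ψ := by
    rintro ⟨y, hy⟩
    obtain ⟨x, rfl⟩ := hφ y
    exact ⟨⟨x, (hA x).2 hy⟩, rfl⟩
  have hk : B.submoduleOf A = LinearMap.ker ψ := by
    ext x
    simp only [Submodule.submoduleOf, Submodule.mem_comap, Submodule.subtype_apply, hB,
      LinearMap.mem_ker, ψ, ← Subtype.coe_inj]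
    rfl
  exact ⟨((Submodule.quotEquivOfEq _ _ hk).trans (ψ.quotKerEquivOfSurjective hs)).symm⟩

/-- `Tor₁(M, N)` from the start `T₂ → T₁ → T₀ → M → 0` of a resolution with `T₀` flat. The complex
`T ⊗ N` enters through a model `V` of it, with isomorphisms `Eᵢ` and differentials `Dᵢ`. -/
lemma tor_one_of_presentation (N : ModuleCat R) {T₀ T₁ T₂ M V₀ V₁ V₂ : Type} [AddCommGroup T₀]
    [Module R T₀] [AddCommGroup T₁] [Module R T₁] [AddCommGroup T₂] [Module R T₂]
    [AddCommGroup M] [Module R M] [AddCommGroup V₀] [Module R V₀] [AddCommGroup V₁] [Module R V₁]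
    [AddCommGroup V₂] [Module R V₂]
    [Module.Flat R T₀] (ε : T₀ →ₗ[R] M) (d₀ : T₁ →ₗ[R] T₀) (d₁ : T₂ →ₗ[R] T₁)
    (hε : Function.Surjective ε) (h₀ : Function.Exact d₀ ε) (h₁ : Function.Exact d₁ d₀)
    (E₀ : TensorProduct R T₀ N ≃ₗ[R] V₀) (E₁ : TensorProduct R T₁ N ≃ₗ[R] V₁)
    (E₂ : TensorProduct R T₂ N ≃ₗ[R] V₂)
    (D₀ : V₁ →ₗ[R] V₀) (D₁ : V₂ →ₗ[R] V₁) (hD₀ : ∀ x, E₀ (d₀.rTensor N x) = D₀ (E₁ x))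
    (hD₁ : ∀ x, E₁ (d₁.rTensor N x) = D₁ (E₂ x)) :
    Nonempty (((Tor (ModuleCat R) 1).obj (ModuleCat.of R M)).obj N ≃ₗ[R]
      LinearMap.ker D₀ ⧸ (LinearMap.range D₁).submoduleOf (LinearMap.ker D₀)) := by
  let Z := LinearMap.ker ε
  let S : ShortComplex (ModuleCat R) :=
    { X₁ := ModuleCat.of R Z, X₂ := ModuleCat.of R T₀, X₃ := ModuleCat.of R M
      f := ModuleCat.ofHom Z.subtype, g := ModuleCat.ofHom ε
      zero := by ext x; exact x.2 }
  have hS : S.ShortExact :=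
    { exact := (ShortComplex.ShortExact.moduleCat_exact_iff_function_exact _).2
        (LinearMap.exact_subtype_ker_map ε)
      mono_f := (ModuleCat.mono_iff_injective _).2 Z.subtype_injective
      epi_g := (ModuleCat.epi_iff_surjective _).2 hε }
  have : Module.Flat R S.X₂ := inferInstanceAs (Module.Flat R T₀)
  obtain ⟨e⟩ := tor_one hS N
  let p : T₁ →ₗ[R] Z := LinearMap.codRestrict _ d₀ (fun x => h₀.apply_apply_eq_zero x)
  have hp : Function.Surjective p := by
    rintro ⟨y, hy⟩
    obtain ⟨x, rfl⟩ := (h₀ y).1 hy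
    exact ⟨x, rfl⟩
  have hpe : Function.Exact d₁ p := by
    intro y
    rw [← h₁ y, ← Subtype.coe_inj]
    rfl
  have hsub : Z.subtype ∘ₗ p = d₀ := by ext; rfl
  obtain ⟨e'⟩ := ker_equiv_quot (p.rTensor N ∘ₗ E₁.symm.toLinearMap)
    ((LinearMap.rTensor_surjective N hp).comp E₁.symm.surjective) (Z.subtype.rTensor N)
    (LinearMap.ker D₀) (LinearMap.range D₁) (by
      intro x
      obtain ⟨x, rfl⟩ := E₁.surjective x
      have : Z.subtype.rTensor N (p.rTensor N x) = d₀.rTensor N x := by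
        rw [← LinearMap.rTensor_comp_apply, hsub]
      simp [this, ← hD₀]) (by
      intro x
      obtain ⟨x, rfl⟩ := E₁.surjective x
      have h := (rTensor_exact N hpe hp) x
      simp only [LinearMap.coe_comp, LinearEquiv.coe_coe, Function.comp_apply,
        LinearEquiv.symm_apply_apply, h, LinearMap.mem_range, Set.mem_range]
      constructor
      · rintro ⟨y, hy⟩
        refine ⟨E₂.symm y, E₁.injective ?_⟩
        rw [hD₁]; simpa using hy
      · rintro ⟨y, rfl⟩
        exact ⟨E₂ y, (hD₁ y).symm⟩)
  exact ⟨e.trans e'⟩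

/-- `Tor₀(M, N) = M ⊗ N` is the cokernel of a model `D₀` of `T₁ ⊗ N → T₀ ⊗ N`. -/
lemma tor_zero_of_presentation (N : ModuleCat R) {T₀ T₁ M V₀ V₁ : Type} [AddCommGroup T₀]
    [Module R T₀] [AddCommGroup T₁] [Module R T₁]
    [AddCommGroup M] [Module R M] [AddCommGroup V₀] [Module R V₀] [AddCommGroup V₁] [Module R V₁]
    (ε : T₀ →ₗ[R] M) (d₀ : T₁ →ₗ[R] T₀)
    (hε : Function.Surjective ε) (h₀ : Function.Exact d₀ ε)
    (E₀ : TensorProduct R T₀ N ≃ₗ[R] V₀) (E₁ : TensorProduct R T₁ N ≃ₗ[R] V₁)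
    (D₀ : V₁ →ₗ[R] V₀) (hD₀ : ∀ x, E₀ (d₀.rTensor N x) = D₀ (E₁ x)) :
    Nonempty (((Tor (ModuleCat R) 0).obj (ModuleCat.of R M)).obj N ≃ₗ[R]
      V₀ ⧸ LinearMap.range D₀) := by
  obtain ⟨e⟩ := tor_zero (ModuleCat.of R M) N
  let φ : V₀ →ₗ[R] TensorProduct R M N := ε.rTensor N ∘ₗ E₀.symm.toLinearMap
  have hφ : Function.Surjective φ :=
    (LinearMap.rTensor_surjective N hε).comp E₀.symm.surjective
  have hk : LinearMap.range D₀ = LinearMap.ker φ := by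
    ext x
    obtain ⟨x, rfl⟩ := E₀.surjective x
    have h := (rTensor_exact N h₀ hε) x
    simp only [φ, LinearMap.mem_ker, LinearMap.coe_comp, LinearEquiv.coe_coe, Function.comp_apply,
      LinearEquiv.symm_apply_apply, h, LinearMap.mem_range, Set.mem_range]
    constructor
    · rintro ⟨y, hy⟩
      refine ⟨E₁.symm y, E₀.injective ?_⟩
      rw [hD₀]; simpa using hy
    · rintro ⟨y, rfl⟩
      exact ⟨E₁ y, (hD₀ y).symm⟩
  exact ⟨e.toLinearEquiv.trans
    ((Submodule.quotEquivOfEq _ _ hk).trans (φ.quotKerEquivOfSurjective hφ)).symm⟩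

/-- `Tor_{n+1}(M, N)` is the homology of `T ⊗ N` for any flat resolution `T` of `M`, by induction on
`n`: `tor_shift` replaces `M` by the first syzygy `ker ε`, which is resolved by the truncation of
`T`. As above, `(V, D)` is a model of `T ⊗ N`. -/
lemma tor_succ_of_resolution (N : ModuleCat R) (n : ℕ) : ∀ {M : Type} [AddCommGroup M] [Module R M]
    {T V : ℕ → Type} [∀ n, AddCommGroup (T n)] [∀ n, Module R (T n)]
    [∀ n, AddCommGroup (V n)] [∀ n, Module R (V n)] [∀ n, Module.Flat R (T n)]
    (ε : T 0 →ₗ[R] M) (d : ∀ n, T (n + 1) →ₗ[R] T n)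
    (_ : Function.Surjective ε) (_ : Function.Exact (d 0) ε)
    (_ : ∀ n, Function.Exact (d (n + 1)) (d n))
    (E : ∀ n, TensorProduct R (T n) N ≃ₗ[R] V n) (D : ∀ n, V (n + 1) →ₗ[R] V n)
    (_ : ∀ n x, E n ((d n).rTensor N x) = D n (E (n + 1) x)),
    Nonempty (((Tor (ModuleCat R) (n + 1)).obj (ModuleCat.of R M)).obj N ≃ₗ[R]
      LinearMap.ker (D n) ⧸ (LinearMap.range (D (n + 1))).submoduleOf (LinearMap.ker (D n))) := by
  induction n with
  | zero =>
    intro M _ _ T V _ _ _ _ _ ε d hε h0 hd E D hD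
    exact tor_one_of_presentation N ε (d 0) (d 1) hε h0 (hd 0) (E 0) (E 1) (E 2) (D 0) (D 1)
      (hD 0) (hD 1)
  | succ n ih =>
    intro M _ _ T V _ _ _ _ _ ε d hε h₀ hd E D hD
    let Z := LinearMap.ker ε
    let S : ShortComplex (ModuleCat R) :=
      { X₁ := ModuleCat.of R Z, X₂ := ModuleCat.of R (T 0), X₃ := ModuleCat.of R M
        f := ModuleCat.ofHom Z.subtype, g := ModuleCat.ofHom ε
        zero := by ext x; exact x.2 }
    have hS : S.ShortExact :=
      { exact := (ShortComplex.ShortExact.moduleCat_exact_iff_function_exact _).2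
          (LinearMap.exact_subtype_ker_map ε)
        mono_f := (ModuleCat.mono_iff_injective _).2 Z.subtype_injective
        epi_g := (ModuleCat.epi_iff_surjective _).2 hε }
    have : Module.Flat R S.X₂ := inferInstanceAs (Module.Flat R (T 0))
    obtain ⟨e⟩ := tor_shift hS N n
    let p : T 1 →ₗ[R] Z := LinearMap.codRestrict _ (d 0) (fun x => h₀.apply_apply_eq_zero x)
    have hp : Function.Surjective p := by
      rintro ⟨y, hy⟩
      obtain ⟨x, rfl⟩ := (h₀ y).1 hy
      exact ⟨x, rfl⟩
    have hpe : Function.Exact (d 1) p := by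
      intro y
      rw [← hd 0 y, ← Subtype.coe_inj]
      rfl
    obtain ⟨e'⟩ := ih (M := Z) (T := fun k => T (k + 1)) (V := fun k => V (k + 1)) p
      (fun k => d (k + 1)) hp hpe (fun k => hd (k + 1)) (fun k => E (k + 1))
      (fun k => D (k + 1)) (fun k => hD (k + 1))
    exact ⟨e.toLinearEquiv.trans e'⟩
end Res

/-! ### The boundary on tuples -/

section Bd
variable {μ : ℕ}

/-- The simplicial boundary on functions `g` on tuples of elements of `Fin μ`: the value at `s` is
the sum of `± g t` over all ways of inserting one entry into `s` to form `t`, the sign being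
given by the position of the insertion. It is defined by recursion on `s`, separating the
insertions in front of `s 0` from those behind it. -/
def bd {A : Type} [AddCommGroup A] :
    ∀ n : ℕ, ((Fin (n + 1) → Fin μ) → A) → (Fin n → Fin μ) → A
  | 0, g, s => ∑ j, g (Fin.cons j s)
  | n + 1, g, s => ∑ j, g (Fin.cons j s) - bd n (fun t => g (Fin.cons (s 0) t)) (Fin.tail s)

variable {A B : Type} [AddCommGroup A] [AddCommGroup B]

lemma bd_map (φ : A →+ B) (n : ℕ) (g : (Fin (n + 1) → Fin μ) → A) (s : Fin n → Fin μ) :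
    φ (bd n g s) = bd n (fun t => φ (g t)) s := by
  induction n with
  | zero => simp [bd]
  | succ n ih => simp [bd, ih]

lemma bd_add (n : ℕ) (g h : (Fin (n + 1) → Fin μ) → A) (s : Fin n → Fin μ) :
    bd n (fun t => g t + h t) s = bd n g s + bd n h s := by
  induction n with
  | zero => simp [bd, Finset.sum_add_distrib]
  | succ n ih => simp only [bd, ih, Finset.sum_add_distrib]; abel

lemma bd_zero (n : ℕ) (s : Fin n → Fin μ) :
    bd n (fun _ => (0 : A)) s = 0 := by
  induction n with
  | zero => simp [bd]
  | succ n ih => simp [bd, ih]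

lemma bd_sub (n : ℕ) (g h : (Fin (n + 1) → Fin μ) → A) (s : Fin n → Fin μ) :
    bd n (fun t => g t - h t) s = bd n g s - bd n h s := by
  induction n with
  | zero => simp [bd]
  | succ n ih => simp only [bd, ih, Finset.sum_sub_distrib]; abel

lemma bd_sum {ι : Type} (I : Finset ι) (n : ℕ) (g : ι → (Fin (n + 1) → Fin μ) → A)
    (s : Fin n → Fin μ) :
    bd n (fun t => ∑ i ∈ I, g i t) s = ∑ i ∈ I, bd n (g i) s := by
  classical
  induction I using Finset.induction_on with
  | empty => simp [bd_zero]
  | insert a I ha ih => simp only [Finset.sum_insert ha, bd_add, ih]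

lemma bd_bd (n : ℕ) (g : (Fin (n + 2) → Fin μ) → A) (s : Fin n → Fin μ) :
    bd n (bd (n + 1) g) s = 0 := by
  induction n with
  | zero =>
    simp only [bd, Finset.sum_sub_distrib, Fin.cons_zero, Fin.tail_cons]
    rw [Finset.sum_comm, sub_self]
  | succ n ih =>
    have key : ∀ a (t : Fin (n + 1) → Fin μ), bd (n + 2) g (Fin.cons a t) =
        ∑ k, g (Fin.cons k (Fin.cons a t)) - bd (n + 1) (fun u => g (Fin.cons a u)) t := by
      intro a t
      rw [bd]; simp only [Fin.cons_zero, Fin.tail_cons]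
    rw [bd]
    simp only [key, bd_sub, bd_sum, ih, sub_zero, Finset.sum_sub_distrib]
    have : ∀ j, bd (n + 1) (fun u => g (Fin.cons j u)) s = ∑ k, g (Fin.cons j (Fin.cons k s)) -
        bd n (fun u => g (Fin.cons j (Fin.cons (s 0) u))) (Fin.tail s) := by
      intro j; rw [bd]
    simp only [this, Finset.sum_sub_distrib]
    rw [Finset.sum_comm]
    abel

/-- The boundary at `s` involves only tuples `t` that contain all entries of `s`. -/
lemma bd_congr (n : ℕ) (g h : (Fin (n + 1) → Fin μ) → A) (s : Fin n → Fin μ)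
    (H : ∀ t, Set.range s ⊆ Set.range t → g t = h t) : bd n g s = bd n h s := by
  induction n with
  | zero =>
    simp only [bd]
    exact Finset.sum_congr rfl fun j _ => H _ (by rintro _ ⟨i, -⟩; exact i.elim0)
  | succ n ih =>
    rw [bd, bd]
    congr 1
    · refine Finset.sum_congr rfl fun j _ => H _ ?_
      rintro _ ⟨i, rfl⟩
      exact ⟨i.succ, by simp⟩
    · refine ih _ _ _ fun t ht => H _ ?_
      rintro _ ⟨i, rfl⟩
      refine Fin.cases ⟨0, by simp⟩ (fun i => ?_) i
      obtain ⟨k, hk⟩ := ht ⟨i, rfl⟩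
      exact ⟨k.succ, by simpa [Fin.tail] using hk⟩

/-- The boundary `bd` in which the term from `t` to `s` is multiplied by the scalar `w n t s`, as a
linear map between modules of `A`-valued functions on tuples. -/
def wbd {R : Type} [CommRing R] (A : Type) [AddCommGroup A] [Module R A]
    (w : ∀ n, (Fin (n + 1) → Fin μ) → (Fin n → Fin μ) → R) (n : ℕ) :
    ((Fin (n + 1) → Fin μ) → A) →ₗ[R] ((Fin n → Fin μ) → A) where
  toFun g s := bd n (fun t => w n t s • g t) s
  map_add' g h := by
    ext s
    simp only [Pi.add_apply, smul_add, bd_add]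
  map_smul' r g := by
    ext s
    simp only [Pi.smul_apply, RingHom.id_apply]
    have := bd_map (DistribSMul.toAddMonoidHom A r) n (fun t => w n t s • g t) s
    simp only [DistribSMul.toAddMonoidHom_apply] at this
    rw [this]
    simp only [smul_comm r]

lemma wbd_apply {R : Type} [CommRing R] (A : Type) [AddCommGroup A] [Module R A]
    (w : ∀ n, (Fin (n + 1) → Fin μ) → (Fin n → Fin μ) → R) (n : ℕ) (g) (s) :
    wbd A w n g s = bd n (fun t => w n t s • g t) s := rfl

/-- Tensoring the weighted boundary over `R` with `N` gives the weighted boundary, with the same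
weights, on `N`-valued functions. -/
lemma wbd_tensor {R : Type} [CommRing R] (N : Type) [AddCommGroup N] [Module R N]
    (w : ∀ n, (Fin (n + 1) → Fin μ) → (Fin n → Fin μ) → R) :
    ∃ E : ∀ n, TensorProduct R ((Fin n → Fin μ) → R) N ≃ₗ[R] ((Fin n → Fin μ) → N),
      ∀ n x, E n ((wbd R w n).rTensor N x) = wbd N w n (E (n + 1) x) := by
  classical
  let E : ∀ n, TensorProduct R ((Fin n → Fin μ) → R) N ≃ₗ[R] ((Fin n → Fin μ) → N) := fun n =>
    TensorProduct.comm R _ _ ≪≫ₗ TensorProduct.piScalarRight R R N (Fin n → Fin μ)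
  have hE : ∀ n f y s, E n (f ⊗ₜ y) s = f s • y := by
    intro n f y s
    simp [E]
  refine ⟨E, fun n x => ?_⟩
  induction x with
  | zero => simp
  | add x y hx hy => simp only [map_add, hx, hy]
  | tmul f y =>
    ext s
    rw [LinearMap.rTensor_tmul, hE, wbd_apply, wbd_apply]
    have := bd_map ((LinearMap.toSpanSingleton R N y).toAddMonoidHom) n
      (fun t => w n t s • f t) s
    simp only [LinearMap.toAddMonoidHom_coe, LinearMap.toSpanSingleton_apply] at this
    rw [this]
    simp only [hE, smul_eq_mul, mul_smul]
end Bd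

/-! ### The Taylor resolution on tuples -/

section Taylor
open MvPolynomial
variable {n μ : ℕ}

/-- The support of the least common multiple of the monomials `m (t i)`. For the empty tuple it is
empty, the least common multiple being `1`. -/
def lcmSupp (m : Fin μ → Finset (Fin n)) {k : ℕ} (t : Fin k → Fin μ) : Finset (Fin n) :=
  Finset.univ.biUnion fun i => m (t i)

lemma mem_lcmSupp (m : Fin μ → Finset (Fin n)) {k : ℕ} (t : Fin k → Fin μ) (x : Fin n) :
    x ∈ lcmSupp m t ↔ ∃ j ∈ Set.range t, x ∈ m j := by
  simp [lcmSupp]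

/-- The weight `lcm(t) / lcm(s)` of the Taylor differential, for a tuple `t` obtained from `s` by
inserting an entry. For unrelated `s` and `t` it is a value that `wbd` never uses. -/
noncomputable def taylorWeight (K : Type) [Field K] (m : Fin μ → Finset (Fin n)) (k : ℕ)
    (t : Fin (k + 1) → Fin μ) (s : Fin k → Fin μ) : MvPolynomial (Fin n) K :=
  ∏ x ∈ lcmSupp m t \ lcmSupp m s, X x

variable (K : Type) [Field K]

/-- The monomial `lcm(t)` of a tuple `t` of generators. -/
noncomputable def lcmMul (m : Fin μ → Finset (Fin n)) {k : ℕ} (t : Fin k → Fin μ) :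
    MvPolynomial (Fin n) K := ∏ x ∈ lcmSupp m t, X x

lemma prod_X_dvd_iff (S : Finset (Fin n)) (p : MvPolynomial (Fin n) K) :
    (∏ x ∈ S, X x) ∣ p ↔ ∀ b, coeff b p ≠ 0 → S ⊆ b.support := by
  have h : (∏ x ∈ S, (X x : MvPolynomial (Fin n) K)) =
      monomial (∑ x ∈ S, Finsupp.single x 1) 1 := by
    rw [monomial_sum_one]; rfl
  have hle : ∀ b : Fin n →₀ ℕ, (∑ x ∈ S, Finsupp.single x 1) ≤ b ↔ S ⊆ b.support := by
    intro b
    have hv : ∀ y, (∑ x ∈ S, Finsupp.single x 1 : Fin n →₀ ℕ) y = if y ∈ S then 1 else 0 := by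
      intro y
      simp [Finsupp.finsetSum_apply, Finsupp.single_apply]
    constructor
    · intro hb x hx
      have := hb x
      rw [hv, if_pos hx] at this
      simp; omega
    · intro hb x
      rw [hv]
      split_ifs with hx
      · have := hb hx
        simp at this; omega
      · exact Nat.zero_le _
  have h2 := mem_ideal_span_monomial_image (x := p) (s := {∑ x ∈ S, Finsupp.single x 1})
  rw [Set.image_singleton, Ideal.mem_span_singleton] at h2
  rw [h, h2]
  simp [hle]

lemma lcmMul_ne_zero (m : Fin μ → Finset (Fin n)) {k : ℕ} (t : Fin k → Fin μ) :
    lcmMul K m t ≠ 0 :=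
  Finset.prod_ne_zero_iff.2 fun x _ => X_ne_zero x

/-- Multiplication by the monomials `lcm(t)` embeds the weighted complex in the unweighted one. -/
lemma lcmMul_wbd (m : Fin μ → Finset (Fin n)) (k : ℕ)
    (u : (Fin (k + 1) → Fin μ) → MvPolynomial (Fin n) K) (s : Fin k → Fin μ) :
    lcmMul K m s * wbd _ (taylorWeight K m) k u s = bd k (fun t => lcmMul K m t * u t) s := by
  have := bd_map (AddMonoidHom.mulLeft (lcmMul K m s)) k (fun t => taylorWeight K m k t s • u t) s
  simp only [AddMonoidHom.coe_mulLeft] at this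
  rw [wbd_apply, this]
  apply bd_congr
  intro t ht
  rw [smul_eq_mul, ← mul_assoc]
  congr 1
  rw [mul_comm]
  apply Finset.prod_sdiff
  intro x hx
  rw [mem_lcmSupp] at hx ⊢
  obtain ⟨j, hj, hx⟩ := hx
  exact ⟨j, ht hj, hx⟩

/-- The part of `p` consisting of the terms whose exponent `b` satisfies `j₀ b = j`. -/
noncomputable def coeffFilter {μ : ℕ} (j₀ : (Fin n →₀ ℕ) → Fin μ) (j : Fin μ)
    (p : MvPolynomial (Fin n) K) : MvPolynomial (Fin n) K :=
  ∑ b ∈ p.support.filter (fun b => j₀ b = j), monomial b (coeff b p)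

lemma coeff_coeffFilter (j₀ : (Fin n →₀ ℕ) → Fin μ) (j : Fin μ)
    (p : MvPolynomial (Fin n) K) (b : Fin n →₀ ℕ) :
    coeff b (coeffFilter K j₀ j p) = if j₀ b = j then coeff b p else 0 := by
  classical
  simp only [coeffFilter, coeff_sum, coeff_monomial, Finset.sum_ite_eq', Finset.mem_filter,
    mem_support_iff]
  by_cases h : coeff b p = 0 <;> simp [h]

/-- `coeffFilter` as an additive map. -/
noncomputable def coeffFilterHom (j₀ : (Fin n →₀ ℕ) → Fin μ) (j : Fin μ) :
    MvPolynomial (Fin n) K →+ MvPolynomial (Fin n) K where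
  toFun := coeffFilter K j₀ j
  map_zero' := by ext b; simp [coeff_coeffFilter]
  map_add' p q := by
    ext b
    simp only [coeff_coeffFilter, coeff_add]
    split_ifs <;> simp

/-- Exactness of the Taylor complex on tuples in positive degrees. After `lcmMul_wbd` the boundary
acts on each coefficient separately, and the coefficient of `x ^ b` lives on tuples of generators
dividing `x ^ b`. If there is one such generator `j₀ b`, prepending it is a contracting homotopy. -/
lemma taylor_exact (hμ : 1 ≤ μ) (m : Fin μ → Finset (Fin n)) (k : ℕ) :
    Function.Exact (wbd (MvPolynomial (Fin n) K) (taylorWeight K m) (k + 1))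
      (wbd (MvPolynomial (Fin n) K) (taylorWeight K m) k) := by
  have : Nonempty (Fin μ) := ⟨⟨0, hμ⟩⟩
  intro u
  constructor
  · intro hu
    have hf : ∀ s, bd k (fun t => lcmMul K m t * u t) s = 0 := by
      intro s; rw [← lcmMul_wbd, hu]; simp
    have hj : ∀ b : Fin n →₀ ℕ, ∃ j : Fin μ, (∃ j', m j' ⊆ b.support) → m j ⊆ b.support := by
      intro b
      by_cases h : ∃ j', m j' ⊆ b.support
      · exact ⟨h.choose, fun _ => h.choose_spec⟩
      · exact ⟨Classical.arbitrary _, fun h' => (h h').elim⟩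
    choose j₀ hj₀ using hj
    -- The image of `lcm(t) * u t` under the homotopy: in multidegree `b` it prepends `j₀ b`.
    let g : (Fin (k + 2) → Fin μ) → MvPolynomial (Fin n) K := fun t =>
      coeffFilter K j₀ (t 0) (lcmMul K m (Fin.tail t) * u (Fin.tail t))
    -- The homotopy preserves the embedded subcomplex because `j₀ b` divides `x ^ b`.
    have hg : ∀ t, lcmMul K m t ∣ g t := by
      intro t
      rw [lcmMul, prod_X_dvd_iff]
      intro b hb
      rw [coeff_coeffFilter] at hb
      split_ifs at hb with h0
      · have h1 := (prod_X_dvd_iff K (lcmSupp m (Fin.tail t))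
          (lcmMul K m (Fin.tail t) * u (Fin.tail t))).1 (Dvd.intro _ rfl) b hb
        intro x hx
        rw [mem_lcmSupp] at hx
        obtain ⟨_, ⟨i, rfl⟩, hx⟩ := hx
        revert hx
        refine Fin.cases ?_ (fun i => ?_) i
        · intro hx
          -- The tail is nonempty, so its first entry is already a generator dividing `x ^ b`.
          have h2 : ∃ j', m j' ⊆ b.support := by
            refine ⟨t 1, fun y hy => h1 ?_⟩
            rw [mem_lcmSupp]
            exact ⟨t 1, ⟨0, rfl⟩, hy⟩
          exact hj₀ b h2 (h0 ▸ hx)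
        · intro hx
          apply h1
          rw [mem_lcmSupp]
          exact ⟨_, ⟨i, rfl⟩, hx⟩
      · exact (hb rfl).elim
    choose v hv using hg
    refine ⟨v, ?_⟩
    ext1 s
    apply mul_left_cancel₀ (lcmMul_ne_zero K m s)
    rw [lcmMul_wbd]
    simp only [← hv]
    have h3 := bd_map (coeffFilterHom K j₀ (s 0)) k (fun t => lcmMul K m t * u t) (Fin.tail s)
    rw [hf, map_zero] at h3
    simp only [bd, g, Fin.cons_zero, Fin.tail_cons]
    have h4 : bd k (fun t => coeffFilter K j₀ (s 0) (lcmMul K m t * u t)) (Fin.tail s) = 0 :=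
      h3.symm
    rw [h4, sub_zero]
    ext b
    simp [coeff_sum, coeff_coeffFilter]
  · rintro ⟨v, rfl⟩
    ext1 s
    apply mul_left_cancel₀ (lcmMul_ne_zero K m s)
    rw [lcmMul_wbd]
    simp only [lcmMul_wbd]
    rw [bd_bd]; simp

/-- The augmentation `R → R/I` of the Taylor complex, whose degree `0` part is indexed by the empty
tuple. -/
noncomputable def taylorAug (m : Fin μ → Finset (Fin n)) :
    ((Fin 0 → Fin μ) → MvPolynomial (Fin n) K) →ₗ[MvPolynomial (Fin n) K]
      MvPolynomial (Fin n) K ⧸ sqIdeal K m :=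
  (sqIdeal K m).mkQ ∘ₗ LinearMap.proj Fin.elim0

lemma taylorAug_surjective (m : Fin μ → Finset (Fin n)) :
    Function.Surjective (taylorAug K m) := by
  intro y
  obtain ⟨x, rfl⟩ := Submodule.mkQ_surjective _ y
  exact ⟨fun _ => x, rfl⟩

lemma taylorAug_exact (m : Fin μ → Finset (Fin n)) :
    Function.Exact (wbd (MvPolynomial (Fin n) K) (taylorWeight K m) 0) (taylorAug K m) := by
  have hw : ∀ (v : (Fin 1 → Fin μ) → MvPolynomial (Fin n) K) (s : Fin 0 → Fin μ),
      wbd (MvPolynomial (Fin n) K) (taylorWeight K m) 0 v s =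
        ∑ j, v (fun _ => j) * sqMonomial K m j := by
    intro v s
    rw [wbd_apply, bd]
    refine Finset.sum_congr rfl fun j _ => ?_
    have h1 : (Fin.cons j s : Fin 1 → Fin μ) = fun _ => j := by
      ext i; rw [show i = 0 by omega]; rfl
    rw [h1, smul_eq_mul, mul_comm, taylorWeight, sqMonomial]
    congr 2
    ext x
    simp [lcmSupp]
  intro u
  have hu : taylorAug K m u = 0 ↔ u Fin.elim0 ∈ sqIdeal K m := by
    simp [taylorAug, Ideal.Quotient.eq_zero_iff_mem]
  rw [hu, sqIdeal, Ideal.mem_span_range_iff_exists_fun]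
  constructor
  · rintro ⟨c, hc⟩
    refine ⟨fun t => c (t 0), ?_⟩
    ext1 s
    rw [hw, hc, Subsingleton.elim s Fin.elim0]
  · rintro ⟨v, rfl⟩
    exact ⟨fun j => v (fun _ => j), (hw _ _).symm⟩
end Taylor

/-! ### Betti numbers and the hypergraph -/

section Betti

lemma tor_zero_of_wbd {R : Type} [CommRing R] (N : ModuleCat R) {μ : ℕ} {M : Type}
    [AddCommGroup M] [Module R M]
    (w : ∀ n, (Fin (n + 1) → Fin μ) → (Fin n → Fin μ) → R)
    (ε : ((Fin 0 → Fin μ) → R) →ₗ[R] M) (hε : Function.Surjective ε)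
    (h₀ : Function.Exact (wbd R w 0) ε) :
    Nonempty (((Tor (ModuleCat R) 0).obj (ModuleCat.of R M)).obj N ≃ₗ[R]
      ((Fin 0 → Fin μ) → N) ⧸ LinearMap.range (wbd N w 0)) := by
  obtain ⟨E, hE⟩ := wbd_tensor N w
  exact tor_zero_of_presentation N ε (wbd R w 0) hε h₀ (E 0) (E 1) (wbd N w 0) (hE 0)

lemma tor_succ_of_wbd {R : Type} [CommRing R] (N : ModuleCat R) {μ : ℕ} {M : Type}
    [AddCommGroup M] [Module R M]
    (w : ∀ n, (Fin (n + 1) → Fin μ) → (Fin n → Fin μ) → R)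
    (ε : ((Fin 0 → Fin μ) → R) →ₗ[R] M) (hε : Function.Surjective ε)
    (h₀ : Function.Exact (wbd R w 0) ε)
    (hd : ∀ n, Function.Exact (wbd R w (n + 1)) (wbd R w n)) (i : ℕ) :
    Nonempty (((Tor (ModuleCat R) (i + 1)).obj (ModuleCat.of R M)).obj N ≃ₗ[R]
      LinearMap.ker (wbd N w i) ⧸
        (LinearMap.range (wbd N w (i + 1))).submoduleOf (LinearMap.ker (wbd N w i))) := by
  obtain ⟨E, hE⟩ := wbd_tensor N w
  exact tor_succ_of_resolution N i (T := fun k => (Fin k → Fin μ) → R)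
    (V := fun k => (Fin k → Fin μ) → N) ε (wbd R w) hε h₀ hd E (wbd N w) hE

/-- Comparison of ranks: `A` and `A'` are the same subset of `V₁`, as an `R`- and as a `K`-submodule,
and so are `B` and `B'`; the `K`-structure on `X` is the restriction of its `R`-structure. -/
lemma rank_transport {K R X V₁ : Type} [Field K] [CommRing R] [Algebra K R]
    [AddCommGroup X] [Module R X] [AddCommGroup V₁] [Module R V₁] [Module K V₁]
    [IsScalarTower K R V₁] (A B : Submodule R V₁) (A' B' : Submodule K V₁)
    (hA : ∀ x, x ∈ A ↔ x ∈ A') (hB : ∀ x, x ∈ B ↔ x ∈ B')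
    (e : X ≃ₗ[R] A ⧸ B.submoduleOf A) :
    @Module.rank K X _ _ (Module.compHom X (algebraMap K R)) =
      Module.rank K (A' ⧸ B'.submoduleOf A') := by
  let : Module K X := Module.compHom X (algebraMap K R)
  have : IsScalarTower K R X := ⟨fun c r x => by
    rw [Algebra.smul_def, mul_smul]; rfl⟩
  let ψ : A' →ₗ[K] A ⧸ B.submoduleOf A :=
    { toFun := fun x => Submodule.Quotient.mk ⟨x.1, (hA _).2 x.2⟩
      map_add' := fun x y => rfl
      map_smul' := fun c x => rfl }
  have hψ : Function.Surjective ψ := by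
    intro y
    obtain ⟨y, rfl⟩ := Submodule.Quotient.mk_surjective _ y
    exact ⟨⟨y.1, (hA _).1 y.2⟩, rfl⟩
  have hk : B'.submoduleOf A' = LinearMap.ker ψ := by
    ext x
    rw [LinearMap.mem_ker]
    change _ ↔ Submodule.Quotient.mk _ = 0
    rw [Submodule.Quotient.mk_eq_zero]
    exact (hB x.1).symm
  have e' := (Submodule.quotEquivOfEq _ _ hk).trans (ψ.quotKerEquivOfSurjective hψ)
  exact ((e.restrictScalars K).trans e'.symm).rank_eq

/-- The case `A = V₁` of `rank_transport`. -/
lemma rank_transport' {K R X V₁ : Type} [Field K] [CommRing R] [Algebra K R]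
    [AddCommGroup X] [Module R X] [AddCommGroup V₁] [Module R V₁] [Module K V₁]
    [IsScalarTower K R V₁] (B : Submodule R V₁) (B' : Submodule K V₁)
    (hB : ∀ x, x ∈ B ↔ x ∈ B') (e : X ≃ₗ[R] V₁ ⧸ B) :
    @Module.rank K X _ _ (Module.compHom X (algebraMap K R)) = Module.rank K (V₁ ⧸ B') := by
  let : Module K X := Module.compHom X (algebraMap K R)
  have : IsScalarTower K R X := ⟨fun c r x => by
    rw [Algebra.smul_def, mul_smul]; rfl⟩
  let ψ : V₁ →ₗ[K] V₁ ⧸ B := B.mkQ.restrictScalars K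
  have hψ : Function.Surjective ψ := B.mkQ_surjective
  have hk : B' = LinearMap.ker ψ := by
    ext x
    rw [LinearMap.mem_ker]
    change _ ↔ Submodule.Quotient.mk _ = 0
    rw [Submodule.Quotient.mk_eq_zero]
    exact (hB x).symm
  have e' := (Submodule.quotEquivOfEq _ _ hk).trans (ψ.quotKerEquivOfSurjective hψ)
  exact ((e.restrictScalars K).trans e'.symm).rank_eq

variable (K : Type) [Field K] {n μ : ℕ}

open Classical in
/-- The Taylor weight `lcm(t) / lcm(s)` evaluated at `0`: it is `1` if `lcm(t)` divides `lcm(s)`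
and `0` otherwise. -/
noncomputable def redWeight (m : Fin μ → Finset (Fin n)) (k : ℕ)
    (t : Fin (k + 1) → Fin μ) (s : Fin k → Fin μ) : K :=
  if lcmSupp m t ⊆ lcmSupp m s then 1 else 0

lemma aeval_taylorWeight (m : Fin μ → Finset (Fin n)) (k : ℕ)
    (t : Fin (k + 1) → Fin μ) (s : Fin k → Fin μ) :
    MvPolynomial.aeval (fun _ : Fin n => (0 : K)) (taylorWeight K m k t s) =
      redWeight K m k t s := by
  rw [taylorWeight, redWeight, map_prod]
  simp only [MvPolynomial.aeval_X]
  rw [Finset.prod_const]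
  split_ifs with h
  · rw [Finset.sdiff_eq_empty_iff_subset.2 h]; simp
  · rw [zero_pow]
    rw [← Finset.sdiff_eq_empty_iff_subset] at h
    simpa using h

/-- The dimension of the homology, in degree `i`, of the complex of `K`-valued functions on tuples
with differentials `wbd K w`. -/
noncomputable def redRank (w : ∀ k, (Fin (k + 1) → Fin μ) → (Fin k → Fin μ) → K) :
    ℕ → Cardinal
  | 0 => Module.rank K (((Fin 0 → Fin μ) → K) ⧸ LinearMap.range (wbd K w 0))
  | k + 1 => Module.rank K (LinearMap.ker (wbd K w k) ⧸
      (LinearMap.range (wbd K w (k + 1))).submoduleOf (LinearMap.ker (wbd K w k)))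

/-- The Betti numbers of `R/I` are computed by the Taylor complex on tuples tensored with `K`; they
depend on the generators only through divisibility between least common multiples. -/
lemma bettiNumber_eq (hμ : 1 ≤ μ) (m : Fin μ → Finset (Fin n)) (i : ℕ) :
    bettiNumber K (sqIdeal K m) i = redRank K (redWeight K m) i := by
  let : Module (MvPolynomial (Fin n) K) K :=
    Module.compHom K (MvPolynomial.aeval (fun _ : Fin n => (0 : K))).toRingHom
  have hsm : ∀ (p : MvPolynomial (Fin n) K) (x : K),
      p • x = MvPolynomial.aeval (fun _ : Fin n => (0 : K)) p * x := fun _ _ => rfl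
  have : IsScalarTower K (MvPolynomial (Fin n) K) K := ⟨fun c r x => by
    rw [hsm, hsm, map_smul, smul_eq_mul, smul_eq_mul, mul_assoc]⟩
  have hD : ∀ k g, wbd (R := MvPolynomial (Fin n) K) K (taylorWeight K m) k g =
      wbd (R := K) K (redWeight K m) k g := by
    intro k g
    ext1 s
    rw [wbd_apply, wbd_apply]
    simp only [hsm, aeval_taylorWeight, smul_eq_mul]
  cases i with
  | zero =>
    obtain ⟨e⟩ := tor_zero_of_wbd (ModuleCat.of (MvPolynomial (Fin n) K) K)
      (taylorWeight K m) (taylorAug K m) (taylorAug_surjective K m) (taylorAug_exact K m)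
    refine rank_transport' (V₁ := (Fin 0 → Fin μ) → K) _ _ (fun x => ?_) e
    simp only [LinearMap.mem_range, hD]
  | succ i =>
    obtain ⟨e⟩ := tor_succ_of_wbd (ModuleCat.of (MvPolynomial (Fin n) K) K)
      (taylorWeight K m) (taylorAug K m) (taylorAug_surjective K m) (taylorAug_exact K m)
      (taylor_exact K hμ m) i
    refine rank_transport (V₁ := (Fin (i + 1) → Fin μ) → K) _ _ _ _
      (fun x => ?_) (fun x => ?_) e
    · simp only [LinearMap.mem_ker, hD]
    · simp only [LinearMap.mem_range, hD]

/-- Divisibility between least common multiples is read off the hypergraph: every edge that meets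
`t` has to meet `s`. -/
lemma lcmSupp_subset_iff (m : Fin μ → Finset (Fin n)) {k l : ℕ} (t : Fin k → Fin μ)
    (s : Fin l → Fin μ) : lcmSupp m t ⊆ lcmSupp m s ↔
      ∀ G ∈ hgEdges m, (∃ i, t i ∈ G) → ∃ i, s i ∈ G := by
  constructor
  · rintro h _ ⟨-, x, rfl⟩ ⟨i, hi⟩
    have hx : x ∈ lcmSupp m t := (mem_lcmSupp m t x).2 ⟨_, ⟨i, rfl⟩, by simpa using hi⟩
    obtain ⟨_, ⟨i', rfl⟩, hi'⟩ := (mem_lcmSupp m s x).1 (h hx)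
    exact ⟨i', by simpa using hi'⟩
  · intro h x hx
    obtain ⟨_, ⟨i, rfl⟩, hi⟩ := (mem_lcmSupp m t x).1 hx
    obtain ⟨i', hi'⟩ := h _ ⟨⟨t i, by simpa using hi⟩, x, rfl⟩ ⟨i, by simpa using hi⟩
    exact (mem_lcmSupp m s x).2 ⟨_, ⟨i', rfl⟩, by simpa using hi'⟩

end Betti

/-- Let `I₁ ⊆ R₁` and `I₂ ⊆ R₂` be square-free monomial ideals in
polynomial rings over the same field `K` (encoded by the supports of their minimal
generators: nonempty supports forming antichains), each with `μ` minimal generators,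
such that `H(I₁) = H(I₂) ∪ {F}` for an edge `F ∉ H(I₂)` which is the union of two or
more distinct edges of `H(I₂)`.  Then `βᵢ(R₁/I₁) = βᵢ(R₂/I₂)` for all `i ≥ 0`; in
particular `pd(R₁/I₁) = pd(R₂/I₂)`. -/
theorem stmt10 (K : Type) [Field K] (μ n₁ n₂ : ℕ) (hμ : 1 ≤ μ)
    (m₁ : Fin μ → Finset (Fin n₁)) (m₂ : Fin μ → Finset (Fin n₂))
    (h₁ne : ∀ j, (m₁ j).Nonempty) (h₂ne : ∀ j, (m₂ j).Nonempty)
    (h₁min : ∀ j k, j ≠ k → ¬ m₁ j ⊆ m₁ k) (h₂min : ∀ j k, j ≠ k → ¬ m₂ j ⊆ m₂ k)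
    (F : Finset (Fin μ)) (hFnot : F ∉ hgEdges m₂)
    (hunion : hgEdges m₁ = hgEdges m₂ ∪ {F})
    (hF : ∃ (t : ℕ) (G : Fin t → Finset (Fin μ)), 2 ≤ t ∧ Function.Injective G ∧
      (∀ i, G i ∈ hgEdges m₂) ∧ F = Finset.univ.sup G) :
    (∀ i : ℕ, bettiNumber K (sqIdeal K m₁) i = bettiNumber K (sqIdeal K m₂) i) ∧
    pdim K (sqIdeal K m₁) = pdim K (sqIdeal K m₂) := by
  obtain ⟨r, G, -, -, hG, rfl⟩ := hF
  -- An edge meets a tuple whenever one of the edges it is a union of does, so adding a union of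
  -- edges leaves the divisibility condition unchanged.
  have hw : redWeight K m₁ = redWeight K m₂ := by
    ext k t s
    have : lcmSupp m₁ t ⊆ lcmSupp m₁ s ↔ lcmSupp m₂ t ⊆ lcmSupp m₂ s := by
      rw [lcmSupp_subset_iff, lcmSupp_subset_iff, hunion]
      constructor
      · exact fun h E hE => h E (Or.inl hE)
      · rintro h E (hE | rfl)
        · exact h E hE
        · rintro ⟨i, hi⟩
          obtain ⟨a, -, ha⟩ := Finset.mem_sup.1 hi
          obtain ⟨i', hi'⟩ := h (G a) (hG a) ⟨i, ha⟩
          exact ⟨i', Finset.mem_sup.2 ⟨a, Finset.mem_univ a, hi'⟩⟩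
    simp only [redWeight, this]
  have hb : ∀ i : ℕ, bettiNumber K (sqIdeal K m₁) i = bettiNumber K (sqIdeal K m₂) i := by
    intro i
    rw [bettiNumber_eq K hμ, bettiNumber_eq K hμ, hw]
  refine ⟨hb, ?_⟩
  simp only [pdim, hb]
end

section
/- Let I_1 ⊆ R_1 and I_2 ⊆ R_2 be square-free monomial ideals in polynomial rings over the same field K, each with μ minimal generators, whose hypergraphs on vertex set {1,…,μ} coincide, H(I_1) = H(I_2), and are separated. Then β_i(R_1/I_1) = β_i(R_2/I_2) for all i ≥ 0; in particular pd(R_1/I_1) = pd(R_2/I_2). -/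
/-!
Let `H` be a hypergraph on `{1,…,μ}` and let `S = K[X F : F ∈ H]` have one variable for each edge.
A square-free monomial ideal `I ⊆ R = K[x₁,…,xₙ]` with hypergraph `H` is the extension of the ideal
`J = (∏_{F ∋ j} X F : j)` of `S` (`canonIdeal`) along the map `S → R` sending `X F` to the product
of all `xᵢ` whose edge is `F`. Along this map `R` is a free `S`-module (`fiberProd_free`): each
monomial of `R` is uniquely the image of a monomial of `S` times a monomial divisible by none of
these products. Therefore a projective resolution of the residue field `K` over `R` is also one over
`S`, and flat base change (`tor_baseChange`) gives `Torᵢ^R(R/I, K) ≅ Torᵢ^S(S/J, K)`. The right-hand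
side depends only on `H`, so ideals with the same hypergraph have the same Betti numbers
(`bettiNumber_sqIdeal`).
-/


open CategoryTheory

/-- A hypergraph on vertex set `{1,…,μ}` is separated if for every pair `j₁ < j₂` there
are edges `F₁, F₂` with `j₁ ∈ F₁ ∖ F₂` and `j₂ ∈ F₂ ∖ F₁`. -/
def SeparatedHG {n μ : ℕ} (m : Fin μ → Finset (Fin n)) : Prop :=
  ∀ j₁ j₂ : Fin μ, j₁ < j₂ →
    ∃ F₁ ∈ hgEdges m, ∃ F₂ ∈ hgEdges m, j₁ ∈ F₁ ∧ j₁ ∉ F₂ ∧ j₂ ∈ F₂ ∧ j₂ ∉ F₁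

open scoped TensorProduct

/-! ### Base change for Tor along a free ring extension -/

/-- If `R` is free over `S`, then projective `R`-modules, being direct summands of free ones, are
projective over `S`. -/
theorem projective_restrict {S R P : Type} [CommRing S] [CommRing R] [Algebra S R]
    [Module.Free S R] [AddCommGroup P] [Module R P] [Module S P] [IsScalarTower S R P]
    [Module.Projective R P] : Module.Projective S P := by
  obtain ⟨s, hs⟩ := (Module.projective_def' (R := R) (P := P)).1 inferInstance
  exact Module.Projective.of_split (s.restrictScalars S)
    ((Finsupp.linearCombination R id).restrictScalars S)
    (LinearMap.ext fun x => LinearMap.congr_fun hs x)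

theorem preservesProjective {S R : Type} [CommRing S] [CommRing R] [Algebra S R]
    [Module.Free S R] :
    (ModuleCat.restrictScalars.{0} (algebraMap S R)).PreservesProjectiveObjects where
  projective_obj {X} hX := by
    have : Module.Projective R X := (IsProjective.iff_projective (R := R) X).2 hX
    letI : Module S X := Module.compHom X (algebraMap S R)
    haveI : IsScalarTower S R X := ⟨fun a b x => by
      rw [Algebra.smul_def, mul_smul]; rfl⟩
    exact (IsProjective.iff_projective (R := S) X).1 (projective_restrict (R := R))

section
variable {S R : Type} [CommRing S] [CommRing R] [Algebra S R] (J : Ideal S)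
  (P : Type) [AddCommGroup P] [Module R P] [Module S P] [IsScalarTower S R P]

/-- The comparison map `S/J ⊗[S] P → R/JR ⊗[R] P`, `s̄ ⊗ p ↦ s̄ ⊗ p`, for an `R`-module `P`. -/
noncomputable def quotTensorMap : (S ⧸ J) ⊗[S] P →ₗ[S] (R ⧸ J.map (algebraMap S R)) ⊗[R] P :=
  TensorProduct.lift
    { toFun := fun n =>
        { toFun := fun p =>
            (Ideal.quotientMap (J.map (algebraMap S R)) (algebraMap S R) Ideal.le_comap_map n) ⊗ₜ[R] p
          map_add' := fun x y => TensorProduct.tmul_add _ _ _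
          map_smul' := fun s x => by
            rw [← algebraMap_smul R s x, TensorProduct.tmul_smul, algebraMap_smul]; rfl }
      map_add' := fun x y => by
        ext p; simp [TensorProduct.add_tmul]
      map_smul' := fun s x => by
        ext p
        obtain ⟨x, rfl⟩ := Ideal.Quotient.mk_surjective x
        rw [← Ideal.Quotient.mk_eq_mk, ← Submodule.Quotient.mk_smul]
        simp [TensorProduct.smul_tmul', Algebra.smul_def] }

@[simp] theorem quotTensorMap_tmul (s : S) (p : P) :
    quotTensorMap J P (Ideal.Quotient.mk J s ⊗ₜ[S] p) =
      (Ideal.Quotient.mk (J.map (algebraMap S R)) (algebraMap S R s)) ⊗ₜ[R] p := by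
  simp [quotTensorMap]

theorem quotTensorMap_naturality (Q : Type) [AddCommGroup Q] [Module R Q] [Module S Q]
    [IsScalarTower S R Q] (g : P →ₗ[R] Q) (x : (S ⧸ J) ⊗[S] P) :
    quotTensorMap J Q ((g.restrictScalars S).lTensor (S ⧸ J) x) =
      g.lTensor (R ⧸ J.map (algebraMap S R)) (quotTensorMap J P x) := by
  induction x using TensorProduct.induction_on with
  | zero => simp
  | add x y hx hy => simp only [map_add, hx, hy]
  | tmul n p =>
    obtain ⟨s, rfl⟩ := Ideal.Quotient.mk_surjective n
    simp

/-- Both sides are quotients of `P` via `p ↦ 1 ⊗ p`, by `J • P` and by `(JR) • P` respectively,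
and these submodules coincide. -/
theorem quotTensorMap_bijective : Function.Bijective (quotTensorMap (R := R) J P) := by
  have hu : ∀ x : (S ⧸ J) ⊗[S] P, ∃ p : P, x = (1 : S ⧸ J) ⊗ₜ[S] p := fun x => by
    obtain ⟨p, hp⟩ := Submodule.Quotient.mk_surjective _ (TensorProduct.quotTensorEquivQuotSMul P J x)
    exact ⟨p, by rw [← TensorProduct.quotTensorEquivQuotSMul_symm_mk, hp, LinearEquiv.symm_apply_apply]⟩
  have hv : ∀ x : (R ⧸ J.map (algebraMap S R)) ⊗[R] P, ∃ p : P, x = 1 ⊗ₜ[R] p := fun x => by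
    obtain ⟨p, hp⟩ := Submodule.Quotient.mk_surjective _ (TensorProduct.quotTensorEquivQuotSMul P _ x)
    exact ⟨p, by rw [← TensorProduct.quotTensorEquivQuotSMul_symm_mk, hp, LinearEquiv.symm_apply_apply]⟩
  have huv : ∀ p : P, quotTensorMap (R := R) J P ((1 : S ⧸ J) ⊗ₜ[S] p) = 1 ⊗ₜ[R] p := fun p => by
    have := quotTensorMap_tmul (R := R) J P 1 p
    simpa using this
  constructor
  · rw [injective_iff_map_eq_zero]
    intro x hx
    obtain ⟨p, rfl⟩ := hu x
    rw [huv] at hx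
    have h2 : p ∈ (J.map (algebraMap S R)) • (⊤ : Submodule R P) := by
      have h3 := congrArg (TensorProduct.quotTensorEquivQuotSMul P _) hx
      rwa [TensorProduct.quotTensorEquivQuotSMul_mk_one_tmul, map_zero,
        Submodule.Quotient.mk_eq_zero] at h3
    clear hx
    have key : ∀ r ∈ J.map (algebraMap S R), ∀ p : P, (1 : S ⧸ J) ⊗ₜ[S] (r • p) = 0 := by
      intro r hr
      induction hr using Submodule.span_induction with
      | mem x hx =>
        obtain ⟨s, hs, rfl⟩ := hx
        intro p
        rw [algebraMap_smul, ← TensorProduct.smul_tmul]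
        have : s • (1 : S ⧸ J) = 0 := by
          rw [Algebra.smul_def, mul_one]
          exact Ideal.Quotient.eq_zero_iff_mem.2 hs
        rw [this, TensorProduct.zero_tmul]
      | zero => simp
      | add x y _ _ hx hy => intro p; rw [add_smul, TensorProduct.tmul_add, hx, hy, add_zero]
      | smul a x _ hx => intro p; rw [smul_eq_mul, mul_comm, mul_smul, hx]
    induction h2 using Submodule.smul_induction_on' with
    | smul r hr n _ => exact key r hr n
    | add x _ y _ hx hy => rw [TensorProduct.tmul_add, hx, hy, add_zero]
  · intro y
    obtain ⟨p, rfl⟩ := hv y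
    exact ⟨_, huv p⟩
end

/-- A bijective additive map `A → B` that is semilinear along `S → R` is an isomorphism of
`S`-modules from `A` to the restriction of scalars of `B`. -/
noncomputable def isoRestrictOfBijective {S R : Type} [CommRing S] [CommRing R] [Algebra S R]
    {A : Type} [AddCommGroup A] [Module S A] (B : ModuleCat.{0} R) (g : A →+ B)
    (hg : Function.Bijective g) (hs : ∀ (s : S) (a : A), g (s • a) = algebraMap S R s • g a) :
    ModuleCat.of S A ≅ (ModuleCat.restrictScalars.{0} (algebraMap S R)).obj B :=
  letI : Module S B := Module.compHom B (algebraMap S R)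
  (LinearEquiv.ofBijective ({ g with map_smul' := hs } : A →ₗ[S] B) hg).toModuleIso

open MonoidalCategory in
/-- The functors `M ↦ S/J ⊗[S] M|_S` and `M ↦ (R/JR ⊗[R] M)|_S` from `R`-modules to `S`-modules
are naturally isomorphic. -/
noncomputable def tensorRestrictIso {S R : Type} [CommRing S] [CommRing R] [Algebra S R]
    (J : Ideal S) :
    ModuleCat.restrictScalars.{0} (algebraMap S R) ⋙
        tensorLeft (ModuleCat.of S (S ⧸ J)) ≅
      tensorLeft (ModuleCat.of R (R ⧸ J.map (algebraMap S R))) ⋙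
        ModuleCat.restrictScalars.{0} (algebraMap S R) :=
  NatIso.ofComponents (fun X =>
    letI : Module S X := Module.compHom X (algebraMap S R)
    haveI : IsScalarTower S R X := ⟨fun a b x => by
      rw [Algebra.smul_def, mul_smul]; rfl⟩
    isoRestrictOfBijective (ModuleCat.of R ((R ⧸ J.map (algebraMap S R)) ⊗[R] X))
      (quotTensorMap (R := R) J X).toAddMonoidHom (quotTensorMap_bijective J X)
      fun s x => ((quotTensorMap (R := R) J X).map_smul s x).trans
        (algebraMap_smul R s (quotTensorMap (R := R) J X x)).symm)
    (fun {X Y} g => by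
      letI : Module S X := Module.compHom X (algebraMap S R)
      haveI : IsScalarTower S R X := ⟨fun a b x => by
        rw [Algebra.smul_def, mul_smul]; rfl⟩
      letI : Module S Y := Module.compHom Y (algebraMap S R)
      haveI : IsScalarTower S R Y := ⟨fun a b x => by
        rw [Algebra.smul_def, mul_smul]; rfl⟩
      ext x
      have h := quotTensorMap_naturality J X Y g.hom
      exact h x)

open MonoidalCategory in
/-- Flat base change for Tor in the form `Torᵢ^R(R/JR, N) ≅ Torᵢ^S(S/J, N|_S)`, for `R` free over
`S`. Since Tor is derived in its second variable, a projective resolution of `N` over `R` restricts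
to one over `S`, and the two tensored complexes agree by `tensorRestrictIso`. -/
theorem tor_baseChange {S R : Type} [CommRing S] [CommRing R] [Algebra S R]
    [Module.Free S R] (J : Ideal S) (N : ModuleCat.{0} R) (i : ℕ) :
    Nonempty ((ModuleCat.restrictScalars.{0} (algebraMap S R)).obj
        (((Tor (ModuleCat.{0} R) i).obj (ModuleCat.of R (R ⧸ J.map (algebraMap S R)))).obj N) ≅
      ((Tor (ModuleCat.{0} S) i).obj (ModuleCat.of S (S ⧸ J))).obj
        ((ModuleCat.restrictScalars.{0} (algebraMap S R)).obj N)) := by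
  let G := ModuleCat.restrictScalars.{0} (algebraMap S R)
  haveI : G.PreservesProjectiveObjects := preservesProjective
  let P := projectiveResolution N
  let P' := G.mapProjectiveResolution P
  let F := (tensoringLeft (ModuleCat.{0} R)).obj (ModuleCat.of R (R ⧸ J.map (algebraMap S R)))
  let F' := (tensoringLeft (ModuleCat.{0} S)).obj (ModuleCat.of S (S ⧸ J))
  let C := (F.mapHomologicalComplex (ComplexShape.down ℕ)).obj P.complex
  let C' := (F'.mapHomologicalComplex (ComplexShape.down ℕ)).obj P'.complex
  let e : C' ≅ (G.mapHomologicalComplex _).obj C :=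
    (NatIso.mapHomologicalComplex (tensorRestrictIso (R := R) J) (ComplexShape.down ℕ)).app P.complex
  have h1 : G.obj (((Tor (ModuleCat.{0} R) i).obj (ModuleCat.of R (R ⧸ J.map (algebraMap S R)))).obj N) ≅
    G.obj (C.homology i) := G.mapIso (P.isoLeftDerivedObj F i)
  have h2 : G.obj (C.homology i) ≅ ((G.mapHomologicalComplex _).obj C).homology i :=
    ((C.sc i).mapHomologyIso G).symm
  have h3 : ((G.mapHomologicalComplex _).obj C).homology i ≅ C'.homology i :=
    (HomologicalComplex.homologyFunctor _ _ i).mapIso e.symm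
  exact ⟨h1 ≪≫ h2 ≪≫ h3 ≪≫ (P'.isoLeftDerivedObj F' i).symm⟩

/-! ### Polynomial rings as free modules over rings generated by products of variables -/

section
open MvPolynomial

section
variable {ι σ : Type} (e : ι → Option σ)

/-- Let `e : ι → Option σ` assign to each variable `xᵢ` at most one variable `y_F`. The exponent
vector of the image of `y ^ a` under `y_F ↦ ∏_{e i = F} xᵢ`: its `i`-th entry is `a (e i)`, or `0`
if `e i = none`. -/
noncomputable def expPull [Finite ι] (a : σ →₀ ℕ) : ι →₀ ℕ :=
  Finsupp.equivFunOnFinite.symm fun i => (e i).elim 0 a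

theorem expPull_some [Finite ι] (a : σ →₀ ℕ) {i : ι} {F : σ} (h : e i = some F) :
    expPull e a i = a F := by simp [expPull, h]

theorem expPull_none [Finite ι] (a : σ →₀ ℕ) {i : ι} (h : e i = none) :
    expPull e a i = 0 := by simp [expPull, h]

theorem expPull_zero [Finite ι] : expPull e 0 = 0 := by
  ext i; cases h : e i <;> simp [expPull, h]

theorem expPull_add [Finite ι] (a b : σ →₀ ℕ) : expPull e (a + b) = expPull e a + expPull e b := by
  ext i; cases h : e i <;> simp [expPull, h]

/-- A monomial `x ^ b` is reduced if it is divisible by none of the products `∏_{e i = F} xᵢ`. -/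
def Reduced (b : ι →₀ ℕ) : Prop := ∀ F : σ, ∃ i, e i = some F ∧ b i = 0

/-- Every monomial of `K[xᵢ]` is uniquely the image of a monomial of `K[y_F]` times a reduced one:
the exponent of `y_F` is the minimum of the exponents of the `xᵢ` with `e i = F`. -/
theorem exp_bijective [Finite ι] [Finite σ] (he : ∀ F, ∃ i, e i = some F) :
    Function.Bijective (fun x : {b // Reduced e b} × (σ →₀ ℕ) => expPull e x.2 + x.1.1) := by
  constructor
  · have aux : ∀ (b b' : {b // Reduced e b}) (a a' : σ →₀ ℕ),
        expPull e a + b.1 = expPull e a' + b'.1 → ∀ F, a' F ≤ a F := by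
      intro b b' a a' h F
      obtain ⟨i, hi, hb⟩ := b.2 F
      have := DFunLike.congr_fun h i
      simp only [Finsupp.add_apply, expPull_some e _ hi, hb] at this
      omega
    rintro ⟨b, a⟩ ⟨b', a'⟩ h
    have h' : expPull e a + b.1 = expPull e a' + b'.1 := h
    have haa : a = a' := by
      ext F
      exact le_antisymm (aux b' b a' a h'.symm F) (aux b b' a a' h' F)
    subst haa
    have : b = b' := Subtype.ext (add_left_cancel h')
    rw [this]
  · intro c
    have hmin : ∀ F, ∃ i, e i = some F ∧ ∀ j, e j = some F → c i ≤ c j := fun F => by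
      obtain ⟨i, hi, hm⟩ := Set.exists_min_image {i | e i = some F} c (Set.toFinite _) (he F)
      exact ⟨i, hi, hm⟩
    choose s hs hmin using hmin
    let a : σ →₀ ℕ := Finsupp.equivFunOnFinite.symm fun F => c (s F)
    have hle : expPull e a ≤ c := fun i => by
      cases h : e i with
      | none => rw [expPull_none e a h]; exact Nat.zero_le _
      | some F => rw [expPull_some e a h]; exact hmin F i h
    refine ⟨⟨⟨c - expPull e a, fun F => ⟨s F, hs F, ?_⟩⟩, a⟩, add_tsub_cancel_of_le hle⟩
    rw [Finsupp.tsub_apply, expPull_some e a (hs F)]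
    exact Nat.sub_self _

variable (K : Type) [Field K] [Fintype ι] [DecidableEq σ]

/-- The `K`-algebra map `K[y_F : F ∈ σ] → K[xᵢ : i ∈ ι]` with `y_F ↦ ∏_{e i = F} xᵢ`. -/
noncomputable def fiberProd : MvPolynomial σ K →ₐ[K] MvPolynomial ι K :=
  aeval fun F => ∏ i ∈ Finset.univ.filter (fun i => e i = some F), X i

theorem fiberProd_monomial (a : σ →₀ ℕ) :
    fiberProd e K (monomial a 1) = monomial (expPull e a) 1 := by
  induction a using Finsupp.induction_linear with
  | zero => rw [expPull_zero]; exact map_one (fiberProd e K)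
  | add a b ha hb =>
    have h : monomial (a + b) (1 : K) = monomial a 1 * monomial b 1 := by simp
    rw [h, map_mul, ha, hb, monomial_mul, expPull_add, one_mul]
  | single F n =>
    rw [← X_pow_eq_monomial, map_pow, fiberProd, aeval_X, ← Finset.prod_pow,
      monomial_eq, map_one, one_mul, Finsupp.prod_fintype _ _ (fun i => pow_zero _),
      Finset.prod_filter]
    refine Finset.prod_congr rfl fun i _ => ?_
    split_ifs with h
    · rw [expPull_some e _ h, Finsupp.single_eq_same]
    · cases h' : e i with
      | none => rw [expPull_none e _ h', pow_zero]
      | some G =>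
        rw [expPull_some e _ h', Finsupp.single_eq_of_ne, pow_zero]
        rintro rfl; exact h h'

/-- `K[xᵢ]` is free over `K[y_F]` on the reduced monomials when every fibre of `e` over `σ` is
nonempty. -/
theorem fiberProd_free [Finite σ] (he : ∀ F, ∃ i, e i = some F) :
    letI := (fiberProd e K).toRingHom.toAlgebra
    Module.Free (MvPolynomial σ K) (MvPolynomial ι K) := by
  letI := (fiberProd e K).toRingHom.toAlgebra
  haveI : IsScalarTower K (MvPolynomial σ K) (MvPolynomial ι K) :=
    IsScalarTower.of_algebraMap_eq fun k => ((fiberProd e K).commutes k).symm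
  let B := {b // Reduced e b}
  let L : (B →₀ MvPolynomial σ K) →ₗ[MvPolynomial σ K] MvPolynomial ι K :=
    Finsupp.linearCombination _ fun b : B => monomial b.1 (1 : K)
  let E : (B →₀ MvPolynomial σ K) ≃ₗ[K] MvPolynomial ι K :=
    (Finsupp.mapRange.linearEquiv (basisMonomials σ K).repr) ≪≫ₗ
      (Finsupp.curryLinearEquiv K).symm ≪≫ₗ
      (Finsupp.domLCongr (Equiv.ofBijective _ (exp_bijective e he))) ≪≫ₗ
      (basisMonomials ι K).repr.symm
  -- `L` is `K[y]`-linear but matches the `K`-bases of both sides, as `E` does; hence it is bijective.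
  have hLE : L.restrictScalars K = E.toLinearMap := by
    refine Finsupp.lhom_ext' fun b => (basisMonomials σ K).ext fun a => ?_
    have h1 : L (Finsupp.single b (monomial a 1)) = monomial (expPull e a + b.1) (1 : K) := by
      simp only [L, Finsupp.linearCombination_single, Algebra.smul_def]
      refine (congrArg (· * _) (fiberProd_monomial e K a)).trans ?_
      rw [monomial_mul, one_mul]
    have h2 : E (Finsupp.single b (monomial a 1)) = monomial (expPull e a + b.1) (1 : K) := by
      have h3 : (Finsupp.curryLinearEquiv K).symm
          (Finsupp.single b (Finsupp.single a (1 : K)) : B →₀ (σ →₀ ℕ) →₀ K) =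
          Finsupp.single (b, a) 1 := by
        rw [LinearEquiv.symm_apply_eq]
        simp [Finsupp.curryLinearEquiv]
      have h4 : Finsupp.mapRange.linearEquiv (basisMonomials σ K).repr
          (Finsupp.single b (monomial a (1 : K)) : B →₀ MvPolynomial σ K) =
          Finsupp.single b (Finsupp.single a 1) := by
        rw [Finsupp.mapRange.linearEquiv_apply, Finsupp.mapRange_single]
        exact congrArg _ ((basisMonomials σ K).repr_self a)
      simp only [E, LinearEquiv.trans_apply]
      rw [h4, h3, Finsupp.domLCongr_single]
      simp
    simpa using h1.trans h2.symm
  have hb : Function.Bijective L := by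
    have : (L : _ → _) = E := congrArg DFunLike.coe hLE
    rw [this]; exact E.bijective
  exact Module.Free.of_equiv (LinearEquiv.ofBijective L hb)
end

end

/-! ### Betti numbers and the hypergraph -/

/-- `bettiNumber` for polynomial rings in an arbitrary set of variables. -/
noncomputable def betti (K : Type) [Field K] {σ : Type} (I : Ideal (MvPolynomial σ K)) (i : ℕ) :
    Cardinal := by
  letI : Module (MvPolynomial σ K) K :=
    Module.compHom K (MvPolynomial.aeval (fun _ : σ => (0 : K))).toRingHom
  let M := ((Tor (ModuleCat (MvPolynomial σ K)) i).obj
      (ModuleCat.of _ ((MvPolynomial σ K) ⧸ I))).obj (ModuleCat.of _ K)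
  letI : Module K M := Module.compHom M (MvPolynomial.C : K →+* MvPolynomial σ K)
  exact Module.rank K M

theorem bettiNumber_eq_betti (K : Type) [Field K] {n : ℕ} (I : Ideal (MvPolynomial (Fin n) K))
    (i : ℕ) : bettiNumber K I i = betti K I i := rfl

theorem rank_eq_of_iso {K S R : Type} [Field K] [CommRing S] [CommRing R] [Algebra S R]
    (c : K →+* S) (c' : K →+* R) (hc : ∀ k, algebraMap S R (c k) = c' k)
    (M : ModuleCat.{0} R) (N : ModuleCat.{0} S)
    (E : (ModuleCat.restrictScalars.{0} (algebraMap S R)).obj M ≅ N) :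
    @Module.rank K M _ _ (Module.compHom M c') = @Module.rank K N _ _ (Module.compHom N c) := by
  letI : Module K M := Module.compHom M c'
  letI : Module K N := Module.compHom N c
  let E' := E.toLinearEquiv
  refine LinearEquiv.rank_eq (R := K) (M := M) (M₁ := N)
    { E'.toAddEquiv with map_smul' := fun k x => ?_ }
  change E' ((c' k • x : M)) = c k • E' x
  rw [← hc]
  exact E'.map_smul (c k) x

/-- Total Betti numbers are unchanged by extending an ideal along a free extension of polynomial
rings that sends the variables into the maximal ideal `(xᵢ)`. -/
theorem betti_map (K : Type) [Field K] {σ ι : Type}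
    (φ : MvPolynomial σ K →ₐ[K] MvPolynomial ι K)
    (hfree : letI := φ.toRingHom.toAlgebra
      Module.Free (MvPolynomial σ K) (MvPolynomial ι K))
    (h0 : ∀ F, MvPolynomial.aeval (fun _ : ι => (0 : K)) (φ (MvPolynomial.X F)) = 0)
    (J : Ideal (MvPolynomial σ K)) (i : ℕ) :
    betti K (J.map φ.toRingHom) i = betti K J i := by
  letI := φ.toRingHom.toAlgebra
  haveI := hfree
  letI m₁ : Module (MvPolynomial ι K) K :=
    Module.compHom K (MvPolynomial.aeval (fun _ : ι => (0 : K))).toRingHom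
  letI m₂ : Module (MvPolynomial σ K) K :=
    Module.compHom K (MvPolynomial.aeval (fun _ : σ => (0 : K))).toRingHom
  have hcomp : ∀ p, MvPolynomial.aeval (fun _ : ι => (0 : K)) (φ p) =
      MvPolynomial.aeval (fun _ : σ => (0 : K)) p := by
    have : (MvPolynomial.aeval (fun _ : ι => (0 : K))).comp φ =
        MvPolynomial.aeval (fun _ : σ => (0 : K)) :=
      MvPolynomial.algHom_ext fun F => by
        rw [AlgHom.comp_apply, h0, MvPolynomial.aeval_X]
    exact fun p => DFunLike.congr_fun this p
  obtain ⟨E⟩ := tor_baseChange J (ModuleCat.of (MvPolynomial ι K) K) i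
  have e : ModuleCat.of (MvPolynomial σ K) K ≅
      (ModuleCat.restrictScalars.{0} (algebraMap (MvPolynomial σ K) (MvPolynomial ι K))).obj
        (ModuleCat.of (MvPolynomial ι K) K) :=
    isoRestrictOfBijective (ModuleCat.of (MvPolynomial ι K) K) (AddMonoidHom.id K)
      Function.bijective_id fun s a => (congrArg (· * a) (hcomp s)).symm
  exact rank_eq_of_iso MvPolynomial.C MvPolynomial.C (fun k => φ.commutes k) _ _
    (E ≪≫ (((Tor (ModuleCat.{0} (MvPolynomial σ K)) i).obj
      (ModuleCat.of _ (MvPolynomial σ K ⧸ J))).mapIso e).symm)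

/-- The ideal attached to a hypergraph `H` on `{1,…,μ}`, in the polynomial ring with one variable
`X F` for each edge `F`: it is generated by the monomials `∏_{F ∋ j} X F`, `j = 1,…,μ`. -/
noncomputable def canonIdeal (K : Type) [Field K] {μ : ℕ} (H : Set (Finset (Fin μ))) :
    Ideal (MvPolynomial H K) :=
  Ideal.span (Set.range fun j : Fin μ =>
    haveI := Fintype.ofFinite H
    ∏ F : H with j ∈ F.1, MvPolynomial.X F)

open Classical in
/-- The edge `{j : xᵢ divides m_j}` of the variable `xᵢ`, or `none` if `xᵢ` divides no generator. -/
noncomputable def edgeOf {n μ : ℕ} (m : Fin μ → Finset (Fin n)) (i : Fin n) :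
    Option (hgEdges m) :=
  if h : (Finset.univ.filter fun j => i ∈ m j).Nonempty then
    some ⟨Finset.univ.filter fun j => i ∈ m j, h, i, rfl⟩ else none

theorem edgeOf_eq_some {n μ : ℕ} (m : Fin μ → Finset (Fin n)) (i : Fin n) (F : hgEdges m) :
    edgeOf m i = some F ↔ F.1 = Finset.univ.filter fun j => i ∈ m j := by
  unfold edgeOf
  split_ifs with h
  · rw [Option.some_inj, Subtype.ext_iff, eq_comm]
  · simp only [reduceCtorEq, false_iff]
    intro h'
    exact h (h' ▸ F.2.1)

/-- The Betti numbers of a square-free monomial ideal are those of the ideal `canonIdeal` of its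
hypergraph, whose extension along `X F ↦ ∏_{xᵢ has edge F} xᵢ` is the given ideal. -/
theorem bettiNumber_sqIdeal (K : Type) [Field K] {n μ : ℕ} (m : Fin μ → Finset (Fin n)) (i : ℕ) :
    bettiNumber K (sqIdeal K m) i = betti K (canonIdeal K (hgEdges m)) i := by
  classical
  letI := Fintype.ofFinite (hgEdges m)
  have he : ∀ F, ∃ i, edgeOf m i = some F := fun F => by
    obtain ⟨i, hi⟩ := F.2.2
    exact ⟨i, (edgeOf_eq_some m i F).2 hi⟩
  have h0 : ∀ F, MvPolynomial.aeval (fun _ : Fin n => (0 : K))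
      (fiberProd (edgeOf m) K (MvPolynomial.X F)) = 0 := fun F => by
    obtain ⟨i, hi⟩ := he F
    rw [fiberProd, MvPolynomial.aeval_X, map_prod]
    exact Finset.prod_eq_zero (i := i) (by simp [hi]) (by simp)
  have hI : sqIdeal K m = (canonIdeal K (hgEdges m)).map (fiberProd (edgeOf m) K).toRingHom := by
    rw [canonIdeal, Ideal.map_span, ← Set.range_comp, sqIdeal]
    congr 2
    funext j
    change _ = fiberProd (edgeOf m) K (∏ F : hgEdges m with j ∈ F.1, MvPolynomial.X F)
    rw [map_prod]
    simp only [fiberProd, MvPolynomial.aeval_X]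
    rw [← Finset.prod_biUnion]
    · refine Finset.prod_congr ?_ fun _ _ => rfl
      ext i
      simp only [Finset.mem_biUnion, Finset.mem_filter, Finset.mem_univ, true_and,
        edgeOf_eq_some]
      constructor
      · intro hi
        have hj : j ∈ Finset.univ.filter fun j => i ∈ m j := by simpa using hi
        exact ⟨⟨_, ⟨j, hj⟩, i, rfl⟩, hj, rfl⟩
      · rintro ⟨F, hj, hF⟩
        rw [hF] at hj
        simpa using hj
    · intro F _ G _ hFG
      refine Finset.disjoint_left.2 fun i hi hi' => hFG ?_
      simp only [Finset.mem_filter, Finset.mem_univ, true_and] at hi hi'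
      exact Option.some_inj.1 (hi.symm.trans hi')
  rw [bettiNumber_eq_betti, hI]
  exact betti_map K _ (fiberProd_free _ K he) h0 _ i

/-- Let `I₁ ⊆ R₁` and `I₂ ⊆ R₂` be square-free monomial ideals in
polynomial rings over the same field `K` (encoded by the supports of their minimal
generators: nonempty supports forming antichains), each with `μ` minimal generators,
whose hypergraphs on vertex set `{1,…,μ}` coincide, `H(I₁) = H(I₂)`, and are separated.
Then `βᵢ(R₁/I₁) = βᵢ(R₂/I₂)` for all `i ≥ 0`; in particular
`pd(R₁/I₁) = pd(R₂/I₂)`. -/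
theorem stmt11 (K : Type) [Field K] (μ n₁ n₂ : ℕ) (hμ : 1 ≤ μ)
    (m₁ : Fin μ → Finset (Fin n₁)) (m₂ : Fin μ → Finset (Fin n₂))
    (h₁ne : ∀ j, (m₁ j).Nonempty) (h₂ne : ∀ j, (m₂ j).Nonempty)
    (h₁min : ∀ j k, j ≠ k → ¬ m₁ j ⊆ m₁ k) (h₂min : ∀ j k, j ≠ k → ¬ m₂ j ⊆ m₂ k)
    (heq : hgEdges m₁ = hgEdges m₂)
    (hsep : SeparatedHG m₁) :
    (∀ i : ℕ, bettiNumber K (sqIdeal K m₁) i = bettiNumber K (sqIdeal K m₂) i) ∧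
    pdim K (sqIdeal K m₁) = pdim K (sqIdeal K m₂) := by
  have hb : ∀ i : ℕ, bettiNumber K (sqIdeal K m₁) i = bettiNumber K (sqIdeal K m₂) i := fun i => by
    rw [bettiNumber_sqIdeal, bettiNumber_sqIdeal, heq]
  exact ⟨hb, by simp only [pdim, hb]⟩
end

section
/- Let I ⊆ R and I' ⊆ R' be square-free monomial ideals in polynomial rings over the same field K, each with μ minimal generators and with separated hypergraphs on the common vertex set {1,…,μ}. If H(I') ⊆ H(I) as sets of edges, then pd(R'/I') ≤ pd(R/I). -/
/-!
The Betti numbers of `R/I` are read off the Taylor resolution: the free complex with basis `e_S`,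
`S ⊆ {1,…,μ}`, in which the coefficient of `e_S` in the boundary of `e_{S ∪ {j}}` is
`± m_{S ∪ {j}} / m_S`, where `m_S = lcm {m_j : j ∈ S}` (`taylor_exact`, `aug_exact`). Since
Mathlib's `Tor` resolves the second argument, `tor_iff` is needed to compute it from a flat
resolution of the first one; this is proved by dimension shifting.

Tensoring with `K` turns the coefficient into `± 1` if `m_j ∣ m_S`, and into `0` otherwise
(`betti_succ_eq_zero_iff`). The condition `m_j ∣ m_S` says that every edge of the hypergraph
through `j` meets `S`. It therefore depends only on the hypergraph, and it gets weaker when edges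
are removed.

Now let `H(I') ⊆ H(I)`. Filter the reduced Taylor complex of `I'` by the number of variables in
the lcm `m_S` of the generators of the *larger* hypergraph `H(I)`. The steps `S ↦ S ∪ {j}` that
preserve this number are exactly those with `m_j ∣ m_S`, and there the reduced coefficient for `I'`
is `± 1` too. So the associated graded complex is the reduced Taylor complex of `I`, and exactness
of the latter in some degree gives exactness of the former (`filtration`, `exAt_of_subset`). Hence
`βᵢ(R/I) = 0` implies `βᵢ(R'/I') = 0` for `i ≥ 1`. As the Betti numbers vanish above `μ`, the
suprema defining the projective dimensions are suprema of bounded sets, and the inequality follows.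
-/

open CategoryTheory

namespace TaylorComplex

/-! ### Vanishing of Tor via flat resolutions of the first argument -/

section TorPart
open TensorProduct

variable {R : Type} [CommRing R]

/-- One dimension shift. For `0 → Z → T → M → 0` exact with `T` flat, and an exact sequence `P` of
flat modules, exactness of `M ⊗ P` at spot `i + 1` says that an element of `Z ⊗ Pᵢ` which becomes
a boundary in `T ⊗ Pᵢ` is already a boundary in `Z ⊗ Pᵢ`; this is a chase in the short exact
sequence of complexes `0 → Z ⊗ P → T ⊗ P → M ⊗ P → 0`. -/
theorem chase {P : ℕ → Type} [∀ k, AddCommGroup (P k)] [∀ k, Module R (P k)]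
    [∀ k, Module.Flat R (P k)] (δ : ∀ k, P (k + 1) →ₗ[R] P k)
    (hδ : ∀ k, Function.Exact (δ (k + 1)) (δ k))
    {Z T M : Type} [AddCommGroup Z] [Module R Z] [AddCommGroup T] [Module R T]
    [AddCommGroup M] [Module R M] [Module.Flat R T]
    (j : Z →ₗ[R] T) (hj : Function.Injective j) (ε : T →ₗ[R] M)
    (hε : Function.Surjective ε) (hjε : Function.Exact j ε) (i : ℕ) :
    Function.Exact ((δ (i + 1)).lTensor M) ((δ i).lTensor M) ↔
      ∀ z : Z ⊗[R] P i, j.rTensor (P i) z ∈ LinearMap.range ((δ i).lTensor T) →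
        z ∈ LinearMap.range ((δ i).lTensor Z) := by
  have cj : ∀ k (z : Z ⊗[R] P (k+1)), j.rTensor _ ((δ k).lTensor Z z)
      = (δ k).lTensor T (j.rTensor _ z) := fun k z => by
    simp only [← LinearMap.comp_apply, LinearMap.rTensor_comp_lTensor,
      LinearMap.lTensor_comp_rTensor]
  have cε : ∀ k (z : T ⊗[R] P (k+1)), ε.rTensor _ ((δ k).lTensor T z)
      = (δ k).lTensor M (ε.rTensor _ z) := fun k z => by
    simp only [← LinearMap.comp_apply, LinearMap.rTensor_comp_lTensor,
      LinearMap.lTensor_comp_rTensor]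
  have ij : ∀ k, Function.Injective (j.rTensor (P k)) := fun k =>
    Module.Flat.rTensor_preserves_injective_linearMap j hj
  have sε : ∀ k, Function.Surjective (ε.rTensor (P k)) := fun k =>
    LinearMap.rTensor_surjective _ hε
  have ex : ∀ k, Function.Exact (j.rTensor (P k)) (ε.rTensor (P k)) := fun k =>
    rTensor_exact _ hjε hε
  have exT : ∀ k, Function.Exact ((δ (k + 1)).lTensor T) ((δ k).lTensor T) := fun k =>
    Module.Flat.lTensor_exact T (hδ k)
  have sq : (δ i).comp (δ (i+1)) = 0 := (hδ i).linearMap_comp_eq_zero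
  constructor
  · rintro h z ⟨t, ht⟩
    obtain ⟨c, hc⟩ := (h (ε.rTensor _ t)).1 (by rw [← cε, ht]; exact (ex _).apply_apply_eq_zero z)
    obtain ⟨t', rfl⟩ := sε _ c
    obtain ⟨z', hz'⟩ := (ex _ (t - (δ (i+1)).lTensor T t')).1 (by rw [map_sub, cε, hc, sub_self])
    refine ⟨z', ij _ ?_⟩
    rw [cj, hz', map_sub, ht, (exT i).apply_apply_eq_zero, sub_zero]
  · intro h c
    constructor
    · intro hc
      obtain ⟨t, rfl⟩ := sε _ c
      rw [← cε] at hc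
      obtain ⟨z, hz⟩ := (ex _ _).1 hc
      obtain ⟨z', rfl⟩ := h z ⟨t, hz.symm⟩
      obtain ⟨t', ht'⟩ := (exT i (t - j.rTensor _ z')).1 (by rw [map_sub, ← cj, hz, sub_self])
      refine ⟨ε.rTensor _ t', ?_⟩
      rw [← cε, ht', map_sub, (ex _).apply_apply_eq_zero, sub_zero]
    · rintro ⟨b, rfl⟩
      rw [← LinearMap.comp_apply, ← LinearMap.lTensor_comp, sq]; simp

/-- Balancing of `Tor`, at the level of vanishing: for flat resolutions `P → N` and `T → M`, the
complex `M ⊗ P` is exact at spot `i + 1` iff `T ⊗ N` is. By induction on `i`, replacing `M` by its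
first syzygy `Z = ker (T₀ → M)`, which is resolved by the shifted complex `T`. -/
theorem tor_res {P : ℕ → Type} [∀ k, AddCommGroup (P k)] [∀ k, Module R (P k)]
    [∀ k, Module.Flat R (P k)] (δ : ∀ k, P (k + 1) →ₗ[R] P k)
    (hδ : ∀ k, Function.Exact (δ (k + 1)) (δ k))
    {N : Type} [AddCommGroup N] [Module R N] (π : P 0 →ₗ[R] N) (hπ : Function.Surjective π)
    (hδπ : Function.Exact (δ 0) π) (i : ℕ) :
    ∀ {T : ℕ → Type} [∀ k, AddCommGroup (T k)] [∀ k, Module R (T k)]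
    [∀ k, Module.Flat R (T k)] (d : ∀ k, T (k + 1) →ₗ[R] T k)
    (_ : ∀ k, Function.Exact (d (k + 1)) (d k))
    {M : Type} [AddCommGroup M] [Module R M] (ε : T 0 →ₗ[R] M) (_ : Function.Surjective ε)
    (_ : Function.Exact (d 0) ε),
    Function.Exact ((δ (i + 1)).lTensor M) ((δ i).lTensor M) ↔
      Function.Exact ((d (i + 1)).rTensor N) ((d i).rTensor N) := by
  induction i with
  | zero =>
    intro T _ _ _ d hd M _ _ ε hε hdε
    let Z := LinearMap.ker ε
    let p : T 1 →ₗ[R] Z := (d 0).codRestrict Z (fun x => hdε.apply_apply_eq_zero x)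
    have hp : Function.Surjective p := fun z => by
      obtain ⟨x, hx⟩ := (hdε z.1).1 z.2
      exact ⟨x, Subtype.ext hx⟩
    have hdp : Function.Exact (d 1) p := fun x => by
      rw [← hd 0 x, Subtype.ext_iff]; rfl
    have hcomp : d 0 = Z.subtype.comp p := rfl
    rw [chase δ hδ Z.subtype Z.injective_subtype ε hε (LinearMap.exact_subtype_ker_map ε) 0]
    -- Both conditions say that `Z ⊗ N → T₀ ⊗ N` is injective, i.e. `Tor₁(M, N) = 0`.
    have key : Function.Injective (Z.subtype.rTensor N) ↔
        Function.Exact ((d 1).rTensor N) ((d 0).rTensor N) := by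
      have e := rTensor_exact N hdp hp
      have s := LinearMap.rTensor_surjective N hp
      rw [hcomp, LinearMap.rTensor_comp]
      constructor
      · intro h x
        rw [← e x, LinearMap.comp_apply]
        exact map_eq_zero_iff _ h
      · intro h
        rw [injective_iff_map_eq_zero]
        intro a ha
        obtain ⟨x, rfl⟩ := s a
        exact (e x).2 ((h x).1 ha)
    rw [← key, injective_iff_map_eq_zero]
    have eZ := lTensor_exact Z hδπ hπ
    have sZ := LinearMap.lTensor_surjective Z hπ
    have eT := lTensor_exact (T 0) hδπ hπ
    have c : ∀ z : Z ⊗[R] P 0, Z.subtype.rTensor N (π.lTensor Z z)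
        = π.lTensor (T 0) (Z.subtype.rTensor _ z) := fun z => by
      simp only [← LinearMap.comp_apply, LinearMap.rTensor_comp_lTensor,
        LinearMap.lTensor_comp_rTensor]
    constructor
    · intro h a ha
      obtain ⟨z, rfl⟩ := sZ a
      exact (eZ z).2 (h z ((eT _).1 (by rw [← c, ha])))
    · intro h z hz
      exact (eZ z).1 (h _ (by rw [c]; exact (eT _).2 hz))
  | succ i ih =>
    intro T _ _ _ d hd M _ _ ε hε hdε
    let Z := LinearMap.ker ε
    let p : T 1 →ₗ[R] Z := (d 0).codRestrict Z (fun x => hdε.apply_apply_eq_zero x)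
    have hp : Function.Surjective p := fun z => by
      obtain ⟨x, hx⟩ := (hdε z.1).1 z.2
      exact ⟨x, Subtype.ext hx⟩
    have hdp : Function.Exact (d 1) p := fun x => by
      rw [← hd 0 x, Subtype.ext_iff]; rfl
    rw [chase δ hδ Z.subtype Z.injective_subtype ε hε (LinearMap.exact_subtype_ker_map ε) (i+1),
      ← ih (T := fun k => T (k+1)) (fun k => d (k+1)) (fun k => hd (k+1)) p hp hdp]
    have exT := Module.Flat.lTensor_exact (T 0) (hδ i)
    have inj : Function.Injective (Z.subtype.rTensor (P i)) :=
      Module.Flat.rTensor_preserves_injective_linearMap _ Z.injective_subtype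
    have c : ∀ z : Z ⊗[R] P (i+1), Z.subtype.rTensor _ ((δ i).lTensor Z z)
        = (δ i).lTensor (T 0) (Z.subtype.rTensor _ z) := fun z => by
      simp only [← LinearMap.comp_apply, LinearMap.rTensor_comp_lTensor,
        LinearMap.lTensor_comp_rTensor]
    have sq : (δ i).comp (δ (i+1)) = 0 := (hδ i).linearMap_comp_eq_zero
    have e1 : ∀ z : Z ⊗[R] P (i+1), Z.subtype.rTensor _ z ∈
        LinearMap.range ((δ (i+1)).lTensor (T 0)) ↔ (δ i).lTensor Z z = 0 := fun z => by
      rw [← map_eq_zero_iff _ inj, c]; exact (exT _).symm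
    simp only [e1]
    constructor
    · intro h z
      refine ⟨h z, ?_⟩
      rintro ⟨b, rfl⟩
      rw [← LinearMap.comp_apply, ← LinearMap.lTensor_comp, sq]; simp
    · intro h z hz
      exact (h z).1 hz

theorem exact_iff_fun (S : ShortComplex (ModuleCat.{0} R)) :
    S.Exact ↔ Function.Exact S.f.hom S.g.hom := by
  rw [ShortComplex.moduleCat_exact_iff_range_eq_ker, LinearMap.exact_iff, eq_comm]

theorem isZero_tor_iff (M N : ModuleCat.{0} R) (i : ℕ) :
    Limits.IsZero (((Tor (ModuleCat R) (i+1)).obj M).obj N) ↔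
    Function.Exact (((projectiveResolution N).complex.d (i+1+1) (i+1)).hom.lTensor M)
      (((projectiveResolution N).complex.d (i+1) i).hom.lTensor M) := by
  rw [show ((Tor (ModuleCat R) (i+1)).obj M).obj N =
      (((MonoidalCategory.tensoringLeft (ModuleCat R)).obj M).leftDerived (i + 1)).obj N from rfl,
    ((projectiveResolution N).isoLeftDerivedObj
      ((MonoidalCategory.tensoringLeft (ModuleCat R)).obj M) (i+1)).isZero_iff]
  erw [← HomologicalComplex.exactAt_iff_isZero_homology]
  rw [HomologicalComplex.exactAt_iff' _ (i+1+1) (i+1) i (by simp) (by simp),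
    exact_iff_fun]
  rfl

/-- `Torᵢ₊₁(M, N)` may be tested on a flat resolution `T` of the first argument, although Mathlib's
`Tor` is computed from a projective resolution of the second. -/
theorem tor_iff (N : ModuleCat.{0} R) (i : ℕ)
    {T : ℕ → Type} [∀ k, AddCommGroup (T k)] [∀ k, Module R (T k)]
    [∀ k, Module.Flat R (T k)] (d : ∀ k, T (k + 1) →ₗ[R] T k)
    (hd : ∀ k, Function.Exact (d (k + 1)) (d k))
    {M : Type} [AddCommGroup M] [Module R M] (ε : T 0 →ₗ[R] M) (hε : Function.Surjective ε)
    (hdε : Function.Exact (d 0) ε) :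
    Limits.IsZero (((Tor (ModuleCat R) (i+1)).obj (ModuleCat.of R M)).obj N) ↔
      Function.Exact ((d (i + 1)).rTensor N) ((d i).rTensor N) := by
  rw [isZero_tor_iff]
  let Q := projectiveResolution N
  have : ∀ k, Module.Flat R (Q.complex.X k) := fun k => by
    have : Module.Projective R (Q.complex.X k) :=
      (IsProjective.iff_projective _).2 (Q.projective k)
    infer_instance
  refine tor_res (P := fun k => Q.complex.X k) (fun k => (Q.complex.d (k+1) k).hom) ?_
    (Q.π.f 0).hom ?_ ?_ i d hd ε hε hdε
  · intro k
    exact (exact_iff_fun _).1 (Q.exact_succ k)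
  · exact (ModuleCat.epi_iff_surjective _).1 inferInstance
  · exact (exact_iff_fun _).1 Q.exact₀

end TorPart

open Finset

/-! ### Taylor-type complexes on the subsets of a finite set -/

section Taylor

/-- The sign `(-1)^{#{s ∈ S : s < j}}` of the face `S` in the simplex `S ∪ {j}`. -/
def sgn {μ : ℕ} (A : Type) [CommRing A] (j : Fin μ) (S : Finset (Fin μ)) : A :=
  (-1) ^ (S.filter (· < j)).card

/-- The Taylor-type differential with coefficients `c`: a function `F` on subsets of `{1,…,μ}` is
read as the chain `∑ F(S) e_S`, and for `j ∉ S` the coefficient of `e_S` in the boundary of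
`e_{S ∪ {j}}` is `± c j S`. Each `D c` removes one element, so the chains on all subsets carry the
total complex at once, without dependent types. -/
def D {μ : ℕ} {A : Type} [CommRing A] (c : Fin μ → Finset (Fin μ) → A)
    (F : Finset (Fin μ) → A) (S : Finset (Fin μ)) : A :=
  ∑ j ∈ Sᶜ, sgn A j S * c j S * F (insert j S)

variable {μ : ℕ} {A : Type} [CommRing A]

lemma sgn_insert {j l : Fin μ} {S : Finset (Fin μ)} (hj : j ∉ S) :
    sgn A l (insert j S) = if j < l then - sgn A l S else sgn A l S := by
  unfold sgn
  rw [filter_insert]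
  split_ifs with h
  · rw [card_insert_of_notMem (by simp [hj]), pow_succ]; ring
  · rfl

lemma sgn_mul_self (j : Fin μ) (S : Finset (Fin μ)) : sgn A j S * sgn A j S = 1 := by
  unfold sgn
  rw [← mul_pow]; simp

lemma sgn_swap {j l : Fin μ} {S : Finset (Fin μ)} (hj : j ∉ S) (hl : l ∉ S) (hjl : j ≠ l) :
    sgn A j S * sgn A l (insert j S) = - (sgn A l S * sgn A j (insert l S)) := by
  rw [sgn_insert hj, sgn_insert hl]
  rcases lt_or_gt_of_ne hjl with h | h
  · rw [if_pos h, if_neg h.not_gt]; ring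
  · rw [if_pos h, if_neg h.not_gt]; ring

/-- The compatibility of the coefficients along the two ways of adding `j` and `l` to `S`; it makes
`D c` a differential. -/
def CoeffSymm (c : Fin μ → Finset (Fin μ) → A) : Prop :=
  ∀ S j l, j ∉ S → l ∉ S → j ≠ l → c j S * c l (insert j S) = c l S * c j (insert l S)

lemma D_D {c : Fin μ → Finset (Fin μ) → A} (hc : CoeffSymm c) (F : Finset (Fin μ) → A) :
    D c (D c F) = 0 := by
  funext S
  simp only [D, Finset.mul_sum, Pi.zero_apply]
  rw [Finset.sum_sigma']
  refine Finset.sum_involution (fun p _ => ⟨p.2, p.1⟩) ?_ ?_ ?_ ?_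
  · rintro ⟨j, l⟩ h
    simp only [mem_sigma, mem_compl, mem_insert, not_or] at h
    obtain ⟨hj, hlj, hl⟩ := h
    simp only
    rw [Finset.insert_comm l j S]
    have h1 := sgn_swap (A := A) hj hl (Ne.symm hlj)
    have h2 := hc S j l hj hl (Ne.symm hlj)
    calc _ = (sgn A j S * sgn A l (insert j S)) * (c j S * c l (insert j S)) *
          F (insert j (insert l S)) + (sgn A l S * sgn A j (insert l S)) *
          (c l S * c j (insert l S)) * F (insert j (insert l S)) := by
            ring
      _ = 0 := by rw [h1, h2]; ring
  · rintro ⟨j, l⟩ h _ he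
    simp only [mem_sigma, mem_compl, mem_insert, not_or] at h
    simp only [Sigma.mk.injEq] at he
    exact h.2.1 he.1
  · rintro ⟨j, l⟩ h
    simp only [mem_sigma, mem_compl, mem_insert, not_or] at h ⊢
    exact ⟨h.2.2, Ne.symm h.2.1, h.1⟩
  · rintro ⟨j, l⟩ h
    rfl

/-- `D c` commutes with restricting chains to `Q`, resp. `P`, when these match along all nonzero
coefficients. Used for the grading by cardinality and for the grading by the weight `w` below. -/
lemma D_restrict (c : Fin μ → Finset (Fin μ) → A) (F : Finset (Fin μ) → A)
    (P Q : Finset (Fin μ) → Prop) [DecidablePred P] [DecidablePred Q]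
    (h : ∀ j S, j ∉ S → c j S ≠ 0 → (Q (insert j S) ↔ P S)) :
    D c (fun S => if Q S then F S else 0) = fun S => if P S then D c F S else 0 := by
  funext S
  simp only [D]
  split_ifs with hP
  · refine Finset.sum_congr rfl fun j hj => ?_
    by_cases h0 : c j S = 0
    · simp [h0]
    · rw [if_pos ((h j S (by simpa using hj) h0).2 hP)]
  · refine Finset.sum_eq_zero fun j hj => ?_
    by_cases h0 : c j S = 0
    · simp [h0]
    · rw [if_neg (fun hq => hP ((h j S (by simpa using hj) h0).1 hq)), mul_zero]

lemma D_zero (c : Fin μ → Finset (Fin μ) → A) : D c 0 = 0 := by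
  funext S; simp [D]

lemma D_sub (c : Fin μ → Finset (Fin μ) → A) (F G : Finset (Fin μ) → A) :
    D c (F - G) = D c F - D c G := by
  funext S; simp [D, mul_sub]

lemma D_add (c : Fin μ → Finset (Fin μ) → A) (F G : Finset (Fin μ) → A) :
    D c (F + G) = D c F + D c G := by
  funext S; simp [D, mul_add, Finset.sum_add_distrib]

/-- Exactness in homological degree `k + 1`: a cycle concentrated on sets of size `k + 1` is a
boundary. The primitive `G` is not required to be concentrated in one degree; its part of degree
`k + 2` is a primitive as well, by `card_restrict`. -/
def ExAt (c : Fin μ → Finset (Fin μ) → A) (k : ℕ) : Prop :=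
  ∀ F : Finset (Fin μ) → A, (∀ S, S.card ≠ k + 1 → F S = 0) → D c F = 0 → ∃ G, D c G = F

lemma card_restrict (c : Fin μ → Finset (Fin μ) → A) (F : Finset (Fin μ) → A) (k : ℕ) :
    D c (fun S => if S.card = k + 1 then F S else 0) =
      fun S => if S.card = k then D c F S else 0 := by
  refine D_restrict c F _ _ fun j S hj _ => ?_
  rw [card_insert_of_notMem hj]; omega

/-- Let `w` be a weight that is monotone under adding elements. If `c'` agrees with `c` on the steps
preserving `w`, and `c` vanishes on all other steps, then `D c` is the associated graded of `D c'`
for the filtration by `w`. Hence exactness of `D c` in a degree gives exactness of `D c'` there. -/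
theorem filtration {c c' : Fin μ → Finset (Fin μ) → A} (hc' : CoeffSymm c')
    (w : Finset (Fin μ) → ℕ) (h1 : ∀ j S, w S ≤ w (insert j S))
    (h2 : ∀ j S, w (insert j S) ≠ w S → c j S = 0)
    (h3 : ∀ j S, w (insert j S) = w S → c' j S = c j S) (k : ℕ) (hex : ExAt c k) :
    ExAt c' k := by
  -- Induction on a strict upper bound `p` of the weights of the cycle `F`: its part of weight `p`
  -- is a `D c`-cycle, and subtracting a `D c'`-boundary kills it.
  have main : ∀ p : ℕ, ∀ F : Finset (Fin μ) → A, (∀ S, S.card ≠ k + 1 → F S = 0) →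
      (∀ S, p ≤ w S → F S = 0) → D c' F = 0 → ∃ G, D c' G = F := by
    intro p
    induction p with
    | zero =>
      intro F _ hF _
      exact ⟨0, by rw [D_zero]; funext S; exact (hF S (Nat.zero_le _)).symm⟩
    | succ p ih =>
      intro F hFk hFp hF
      have wres : ∀ F : Finset (Fin μ) → A, D c (fun S => if w S = p then F S else 0) =
          fun S => if w S = p then D c F S else 0 := fun F => by
        refine D_restrict c F _ _ fun j S _ h0 => ?_
        rw [not_imp_comm.1 (h2 j S) h0]
      obtain ⟨G, hG⟩ := hex (fun S => if w S = p then F S else 0)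
        (fun S hS => by simp [hFk S hS]) (by
          rw [wres]; funext S
          split_ifs with hS
          · rw [← congrFun hF S]
            refine Finset.sum_congr rfl fun j _ => ?_
            by_cases hw : w (insert j S) = w S
            · rw [h3 j S hw]
            · rw [hFp (insert j S) (by have := h1 j S; omega), mul_zero, mul_zero]
          · rfl)
      let G₁ : Finset (Fin μ) → A := fun S =>
        if w S = p then (if S.card = (k + 1) + 1 then G S else 0) else 0
      have hG₁ : D c G₁ = fun S => if w S = p then F S else 0 := by
        rw [wres, card_restrict, hG]
        funext S
        by_cases hs : S.card = k + 1
        · simp +contextual [hs]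
        · simp [hs, hFk S hs]
      have hG₁' : ∀ S, p ≤ w S → D c' G₁ S = if w S = p then F S else 0 := by
        intro S hS
        rw [← congrFun hG₁ S]
        refine Finset.sum_congr rfl fun j _ => ?_
        by_cases hw : w (insert j S) = w S
        · rw [h3 j S hw]
        · have : G₁ (insert j S) = 0 := if_neg (by have := h1 j S; omega)
          rw [this, mul_zero, mul_zero]
      have k1 : ∀ S, S.card ≠ k + 1 → (F - D c' G₁) S = 0 := by
        intro S hS
        have : D c' G₁ S = 0 := Finset.sum_eq_zero fun j hj => by
          have : G₁ (insert j S) = 0 := by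
            have hcard := card_insert_of_notMem (mem_compl.1 hj)
            simp only [G₁]
            rw [if_neg (show ¬ (insert j S).card = (k + 1) + 1 by omega), ite_self]
          rw [this, mul_zero]
        rw [Pi.sub_apply, hFk S hS, this, sub_zero]
      have k2 : ∀ S, p ≤ w S → (F - D c' G₁) S = 0 := by
        intro S hS
        rw [Pi.sub_apply, hG₁' S hS]
        split_ifs with hw
        · exact sub_self _
        · rw [hFp S (by omega), sub_zero]
      obtain ⟨H, hH⟩ := ih (F - D c' G₁) k1 k2 (by rw [D_sub, hF, D_D hc', sub_zero])
      exact ⟨H + G₁, by rw [D_add, hH, sub_add_cancel]⟩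
  intro F hFk hF
  exact main (Finset.univ.sup w + 1) F hFk
    (fun S hS => absurd (Finset.le_sup (f := w) (Finset.mem_univ S)) (by omega)) hF

/-! ### The graded pieces as free modules -/

/-- The free `A`-module of chains of homological degree `k`, with basis the `k`-element sets. -/
abbrev Gr (μ : ℕ) (A : Type) (k : ℕ) : Type := {S : Finset (Fin μ) // S.card = k} → A

/-- Extension by zero of a chain of degree `k` to all subsets. -/
def ext0 {k : ℕ} (F : Gr μ A k) (S : Finset (Fin μ)) : A :=
  if h : S.card = k then F ⟨S, h⟩ else 0

lemma ext0_val {k : ℕ} (F : Gr μ A k) (S : {S : Finset (Fin μ) // S.card = k}) :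
    ext0 F S.1 = F S := dif_pos S.2

lemma ext0_restrict {k : ℕ} (F : Finset (Fin μ) → A) :
    ext0 (fun S : {S : Finset (Fin μ) // S.card = k} => F S.1) =
      fun S => if S.card = k then F S else 0 := by
  funext S; simp [ext0]

/-- The component `Gr μ A (k + 1) → Gr μ A k` of the differential `D c`. -/
def dgr (c : Fin μ → Finset (Fin μ) → A) (k : ℕ) : Gr μ A (k + 1) →ₗ[A] Gr μ A k where
  toFun F S := D c (ext0 F) S.1
  map_add' F G := by
    funext S
    rw [show ext0 (F + G) = ext0 F + ext0 G by
      funext T; simp only [ext0, Pi.add_apply]; split_ifs <;> simp,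
      D_add]; rfl
  map_smul' a F := by
    funext S
    simp only [D, ext0, Pi.smul_apply, smul_eq_mul, RingHom.id_apply, Finset.mul_sum]
    refine Finset.sum_congr rfl fun j _ => ?_
    split_ifs
    · ring
    · simp

lemma ext0_dgr (c : Fin μ → Finset (Fin μ) → A) (k : ℕ) (f : Gr μ A (k + 1)) :
    ext0 (dgr c k f) = D c (ext0 f) := by
  have h1 : ext0 f = fun S => if S.card = k + 1 then ext0 f S else 0 := by
    funext S; simp only [ext0]; split_ifs <;> rfl
  have h2 := ext0_restrict (k := k) (D c (ext0 f))
  rw [← card_restrict, ← h1] at h2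
  exact h2

lemma ext0_injective (k : ℕ) : Function.Injective (ext0 : Gr μ A k → _) := fun f g h => by
  funext S; rw [← ext0_val f, h, ext0_val]

lemma ext0_zero (k : ℕ) : ext0 (0 : Gr μ A k) = 0 := by
  funext S; simp [ext0]

lemma ext0_of_supp {k : ℕ} {F : Finset (Fin μ) → A} (h : ∀ S, S.card ≠ k → F S = 0) :
    ext0 (fun S : {S : Finset (Fin μ) // S.card = k} => F S.1) = F := by
  rw [ext0_restrict]; funext S
  split_ifs with hS
  · rfl
  · exact (h S hS).symm

theorem graded_exact_iff {c : Fin μ → Finset (Fin μ) → A} (hc : CoeffSymm c) (k : ℕ) :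
    Function.Exact (dgr c (k + 1)) (dgr c k) ↔ ExAt c k := by
  constructor
  · intro h F hF hDF
    obtain ⟨g, hg⟩ := (h (fun S => F S.1)).1 (by
      apply ext0_injective; rw [ext0_dgr, ext0_of_supp hF, hDF, ext0_zero])
    exact ⟨ext0 g, by rw [← ext0_dgr, hg, ext0_of_supp hF]⟩
  · intro h f
    constructor
    · intro hf
      obtain ⟨G, hG⟩ := h (ext0 f) (fun S hS => dif_neg hS) (by rw [← ext0_dgr, hf, ext0_zero])
      refine ⟨fun S => G S.1, ext0_injective _ ?_⟩
      rw [ext0_dgr, ext0_restrict, card_restrict, hG]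
      funext S; simp only [ext0]; split_ifs <;> rfl
    · rintro ⟨g, rfl⟩
      apply ext0_injective
      rw [ext0_dgr, ext0_dgr, D_D hc, ext0_zero]

open TensorProduct in
/-- Base change of the complex along `φ : A → K` applies `φ` to the coefficients. -/
theorem rTensor_exact_iff {K : Type} [CommRing K] (φ : A →+* K)
    (c : Fin μ → Finset (Fin μ) → A) (k : ℕ) :
    letI : Module A K := Module.compHom K φ
    Function.Exact ((dgr c (k + 1)).rTensor K) ((dgr c k).rTensor K) ↔
      Function.Exact (dgr (fun j S => φ (c j S)) (k + 1)) (dgr (fun j S => φ (c j S)) k) := by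
  let _ : Module A K := Module.compHom K φ
  let e : ∀ k, Gr μ A k ⊗[A] K ≃ₗ[A] Gr μ K k := fun k =>
    (TensorProduct.comm A _ _).trans (TensorProduct.piScalarRight A A K _)
  have he : ∀ k (f : Gr μ A k) (x : K), e k (f ⊗ₜ x) = fun S => φ (f S) * x := fun k f x => by
    simp [e]; rfl
  have comm : ∀ k (y : Gr μ A (k+1) ⊗[A] K),
      e k ((dgr c k).rTensor K y) = dgr (fun j S => φ (c j S)) k (e (k+1) y) := by
    intro k y
    induction y with
    | zero => simp
    | add x y hx hy => simp only [map_add, hx, hy]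
    | tmul f x =>
      rw [LinearMap.rTensor_tmul, he, he]
      funext S
      simp only [dgr, LinearMap.coe_mk, AddHom.coe_mk, D, map_sum, map_mul, Finset.sum_mul]
      refine Finset.sum_congr rfl fun j _ => ?_
      have : φ (sgn A j S.1) = sgn K j S.1 := by simp [sgn]
      rw [this]
      simp only [ext0]
      split_ifs
      · ring
      · simp
  have e0 : ∀ k (y : Gr μ A k ⊗[A] K), e k y = 0 ↔ y = 0 := fun k y => (e k).map_eq_zero_iff
  constructor
  · intro h y
    obtain ⟨y, rfl⟩ := (e _).surjective y
    rw [← comm, e0, h y]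
    constructor
    · rintro ⟨x, rfl⟩; exact ⟨e _ x, (comm _ _).symm⟩
    · rintro ⟨x, hx⟩
      obtain ⟨x, rfl⟩ := (e _).surjective x
      exact ⟨x, (e _).injective (by rw [comm, hx])⟩
  · intro h y
    rw [← e0, comm, h]
    constructor
    · rintro ⟨x, hx⟩
      obtain ⟨x, rfl⟩ := (e _).surjective x
      exact ⟨x, (e _).injective (by rw [comm, hx])⟩
    · rintro ⟨x, rfl⟩; exact ⟨e _ x, (comm _ _).symm⟩

end Taylor

/-! ### Exactness of the Taylor complex -/

section Mono

/-- The support of `m_S = lcm {m_j : j ∈ S}`. -/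
def lcmSupp {n μ : ℕ} (m : Fin μ → Finset (Fin n)) (S : Finset (Fin μ)) : Finset (Fin n) :=
  S.biUnion m

/-- The Taylor coefficient `m_{S ∪ {j}} / m_S`, as the product of the variables new in `m_j`. -/
noncomputable def tc (K : Type) [Field K] {n μ : ℕ} (m : Fin μ → Finset (Fin n)) (j : Fin μ)
    (S : Finset (Fin μ)) : MvPolynomial (Fin n) K :=
  ∏ i ∈ m j \ lcmSupp m S, MvPolynomial.X i

variable (K : Type) [Field K] {n μ : ℕ} (m : Fin μ → Finset (Fin n))

lemma lcmSupp_insert (j : Fin μ) (S : Finset (Fin μ)) :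
    lcmSupp m (insert j S) = m j ∪ lcmSupp m S := by
  simp [lcmSupp, Finset.biUnion_insert]

/-- The monomial `m_S = lcm {m_j : j ∈ S}`. -/
noncomputable def lcmMon (S : Finset (Fin μ)) : MvPolynomial (Fin n) K :=
  ∏ i ∈ lcmSupp m S, MvPolynomial.X i

lemma lcmMon_insert (j : Fin μ) (S : Finset (Fin μ)) :
    lcmMon K m (insert j S) = lcmMon K m S * tc K m j S := by
  rw [lcmMon, lcmSupp_insert, lcmMon, tc, mul_comm, ← Finset.prod_union Finset.sdiff_disjoint]
  rw [Finset.sdiff_union_self_eq_union]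

lemma lcmMon_ne_zero (S : Finset (Fin μ)) : lcmMon K m S ≠ 0 :=
  Finset.prod_ne_zero_iff.2 fun i _ => MvPolynomial.X_ne_zero i

lemma tc_symm : CoeffSymm (tc K m) := by
  intro S j l hj hl hjl
  apply mul_left_cancel₀ (lcmMon_ne_zero K m S)
  rw [← mul_assoc, ← mul_assoc, ← lcmMon_insert, ← lcmMon_insert, ← lcmMon_insert,
    ← lcmMon_insert, Finset.insert_comm]

variable {K} in
/-- A square-free monomial divides `f` iff it divides every monomial occurring in `f`. -/
lemma prod_X_dvd_iff (s : Finset (Fin n)) (f : MvPolynomial (Fin n) K) :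
    (∏ i ∈ s, MvPolynomial.X i) ∣ f ↔ ∀ b, f.coeff b ≠ 0 → ∀ i ∈ s, b i ≠ 0 := by
  have h : (∏ i ∈ s, MvPolynomial.X i : MvPolynomial (Fin n) K) =
      MvPolynomial.monomial (∑ i ∈ s, Finsupp.single i 1) 1 := by
    rw [MvPolynomial.monomial_sum_one]; rfl
  have h2 := MvPolynomial.mem_ideal_span_monomial_image (x := f)
    (s := {∑ i ∈ s, Finsupp.single i 1})
  rw [Set.image_singleton, Ideal.mem_span_singleton, ← h] at h2
  rw [h2]
  simp only [MvPolynomial.mem_support_iff, Set.mem_singleton_iff, exists_eq_left]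
  refine forall₂_congr fun b _ => ?_
  have hs : ∀ i, (∑ i ∈ s, Finsupp.single i 1 : Fin n →₀ ℕ) i = if i ∈ s then 1 else 0 :=
      fun i => by
    simp [Finsupp.finsetSum_apply, Finsupp.single_apply]
  rw [Finsupp.le_def]
  simp only [hs]
  refine forall_congr' fun i => ?_
  split_ifs with hi
  · simp [hi, Nat.one_le_iff_ne_zero]
  · simp [hi]

/-- Multiplying the coefficient at `S` by `m_S` embeds the Taylor complex into the simplicial
chain complex of the full simplex over the polynomial ring. -/
lemma lcmMon_mul_D (F : Finset (Fin μ) → MvPolynomial (Fin n) K) (S : Finset (Fin μ)) :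
    lcmMon K m S * D (tc K m) F S = D (fun _ _ => 1) (fun S => lcmMon K m S * F S) S := by
  simp only [D, Finset.mul_sum]
  refine Finset.sum_congr rfl fun j _ => ?_
  rw [lcmMon_insert]; ring

lemma coeff_D (g : Finset (Fin μ) → MvPolynomial (Fin n) K) (b : Fin n →₀ ℕ)
    (S : Finset (Fin μ)) :
    (D (fun _ _ => 1) g S).coeff b = D (fun _ _ => (1 : K)) (fun S => (g S).coeff b) S := by
  simp only [D, MvPolynomial.coeff_sum, mul_one]
  refine Finset.sum_congr rfl fun j _ => ?_
  have : sgn (MvPolynomial (Fin n) K) j S = MvPolynomial.C (sgn K j S) := by simp [sgn]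
  rw [this, MvPolynomial.coeff_C_mul]

/-- The cone with apex `j₀` over the chain `g`, in the chain complex of the full simplex. -/
def cone (j₀ : Fin μ) (g : Finset (Fin μ) → K) (S : Finset (Fin μ)) : K :=
  if j₀ ∈ S then sgn K j₀ (S.erase j₀) * g (S.erase j₀) else 0

/-- Coning off contracts the chain complex of the full simplex. -/
lemma D_cone (j₀ : Fin μ) (g : Finset (Fin μ) → K) (hg : D (fun _ _ => (1 : K)) g = 0) :
    D (fun _ _ => (1 : K)) (cone K j₀ g) = g := by
  funext S
  by_cases hS : j₀ ∈ S
  · obtain ⟨U, hU, rfl⟩ : ∃ U, j₀ ∉ U ∧ S = insert j₀ U :=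
      ⟨S.erase j₀, notMem_erase _ _, (insert_erase hS).symm⟩
    have h0 := congrFun hg U
    have hc : Uᶜ = insert j₀ (insert j₀ U)ᶜ := by
      ext x; by_cases hx : x = j₀ <;> simp [hx, hU]
    simp only [D, mul_one, Pi.zero_apply] at h0 ⊢
    rw [hc, sum_insert (by simp)] at h0
    have : ∑ j ∈ (insert j₀ U)ᶜ, sgn K j (insert j₀ U) * cone K j₀ g (insert j (insert j₀ U))
        = - (sgn K j₀ U * ∑ j ∈ (insert j₀ U)ᶜ, sgn K j U * g (insert j U)) := by
      rw [mul_sum, ← sum_neg_distrib]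
      refine sum_congr rfl fun j hj => ?_
      simp only [mem_compl, mem_insert, not_or] at hj
      have he : (insert j (insert j₀ U)).erase j₀ = insert j U := by
        rw [insert_comm, erase_insert (by simp [hU, Ne.symm hj.1])]
      rw [cone, if_pos (by simp), he]
      have h1 := sgn_swap (A := K) hU hj.2 (Ne.symm hj.1)
      have h2 := sgn_mul_self (A := K) j₀ U
      have h3 := sgn_mul_self (A := K) j U
      have h4 := sgn_mul_self (A := K) j₀ (insert j U)
      linear_combination (g (insert j U)) * (sgn K j₀ U * sgn K j₀ (insert j U) * h1
        - sgn K j (insert j₀ U) * sgn K j₀ (insert j U) * h2 - sgn K j₀ U * sgn K j U * h4)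
    rw [this]
    linear_combination (- sgn K j₀ U) * h0 + g (insert j₀ U) * sgn_mul_self (A := K) j₀ U
  · simp only [D, mul_one]
    rw [sum_eq_single_of_mem j₀ (by simpa using hS)]
    · rw [cone, if_pos (mem_insert_self _ _), erase_insert hS, ← mul_assoc, sgn_mul_self, one_mul]
    · intro j _ hj
      rw [cone, if_neg (by simp [hS, Ne.symm hj]), mul_zero]

/-- Exactness of the Taylor complex above degree `0`. In multidegree `b` the image of the complex
under multiplication by `m_S` is the chain complex of the full simplex on `{j : m_j ∣ x^b}`, which
is contracted by coning with any vertex of it. If there is no such vertex, only the coefficient at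
the empty set survives, and it is excluded by `h0`. -/
theorem taylor_exact (F : Finset (Fin μ) → MvPolynomial (Fin n) K) (hF : D (tc K m) F = 0)
    (h0 : F ∅ = 0) : ∃ G, D (tc K m) G = F := by
  classical
  let g : Finset (Fin μ) → MvPolynomial (Fin n) K := fun S => lcmMon K m S * F S
  have hg : D (fun _ _ => 1) g = 0 := by
    funext S; rw [← lcmMon_mul_D, hF]; simp
  have hgd : ∀ S b, (g S).coeff b ≠ 0 → ∀ i ∈ lcmSupp m S, b i ≠ 0 := fun S =>
    (prod_X_dvd_iff _ _).1 (Dvd.intro _ rfl)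
  let c : (Fin n →₀ ℕ) → Finset (Fin μ) → K := fun b =>
    if h : ∃ j, ∀ i ∈ m j, b i ≠ 0 then cone K h.choose (fun S => (g S).coeff b) else 0
  have hc : ∀ b, D (fun _ _ => (1 : K)) (c b) = fun S => (g S).coeff b := by
    intro b
    by_cases h : ∃ j, ∀ i ∈ m j, b i ≠ 0
    · simp only [c, dif_pos h]
      apply D_cone
      funext S
      rw [← coeff_D, hg]; simp
    · simp only [c, dif_neg h]
      rw [D_zero]
      funext S
      by_contra hne
      have hne : (g S).coeff b ≠ 0 := fun h => hne (by simp [h])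
      rcases S.eq_empty_or_nonempty with rfl | ⟨j, hj⟩
      · simp [g, h0] at hne
      · exact h ⟨j, fun i hi => hgd S b hne i (mem_biUnion.2 ⟨j, hj, hi⟩)⟩
  have hcd : ∀ b S, c b S ≠ 0 → ∀ i ∈ lcmSupp m S, b i ≠ 0 := by
    intro b S hb i hi
    by_cases h : ∃ j, ∀ i ∈ m j, b i ≠ 0
    · simp only [c, dif_pos h, cone] at hb
      split_ifs at hb with hj
      · rw [← insert_erase hj, lcmSupp_insert, mem_union] at hi
        rcases hi with hi | hi
        · exact h.choose_spec i hi
        · exact hgd _ b (right_ne_zero_of_mul hb) i hi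
      · exact absurd rfl hb
    · simp [c, dif_neg h] at hb
  -- Only finitely many multidegrees occur in `g`, so the primitives `c b` sum to polynomials.
  let B : Finset (Fin n →₀ ℕ) := univ.biUnion fun S => (g S).support
  have hcB : ∀ b S, b ∉ B → c b S = 0 := by
    intro b S hb
    have : ∀ S, (g S).coeff b = 0 := fun S => by
      by_contra h
      exact hb (mem_biUnion.2 ⟨S, mem_univ _, MvPolynomial.mem_support_iff.2 h⟩)
    simp only [c]
    split_ifs
    · simp [cone, this]
    · rfl
  let h : Finset (Fin μ) → MvPolynomial (Fin n) K := fun S =>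
    ∑ b ∈ B, MvPolynomial.monomial b (c b S)
  have hh : ∀ b S, (h S).coeff b = c b S := by
    intro b S
    simp only [h, MvPolynomial.coeff_sum, MvPolynomial.coeff_monomial]
    rw [Finset.sum_ite_eq']
    split_ifs with hb
    · rfl
    · exact (hcB b S hb).symm
  have hdvd : ∀ S, lcmMon K m S ∣ h S := fun S =>
    (prod_X_dvd_iff _ _).2 fun b hb => hcd b S (by rwa [← hh])
  -- The primitive found in the full simplex lies in the Taylor complex.
  choose G hG using hdvd
  refine ⟨G, ?_⟩
  funext S
  apply mul_left_cancel₀ (lcmMon_ne_zero K m S)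
  rw [lcmMon_mul_D]
  have : (fun S => lcmMon K m S * G S) = h := funext fun S => (hG S).symm
  rw [this]
  ext b
  rw [coeff_D]
  simp only [hh]
  exact congrFun (hc b) S

end Mono

/-! ### Betti numbers and comparison of hypergraphs -/

section Final

lemma betti_eq_zero_iff (K : Type) [Field K] {n : ℕ} (I : Ideal (MvPolynomial (Fin n) K)) (i : ℕ) :
    letI : Module (MvPolynomial (Fin n) K) K :=
      Module.compHom K (MvPolynomial.aeval (fun _ : Fin n => (0 : K))).toRingHom
    bettiNumber K I i = 0 ↔
      Limits.IsZero (((Tor (ModuleCat (MvPolynomial (Fin n) K)) i).obj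
        (ModuleCat.of _ ((MvPolynomial (Fin n) K) ⧸ I))).obj (ModuleCat.of _ K)) := by
  let _ : Module (MvPolynomial (Fin n) K) K :=
    Module.compHom K (MvPolynomial.aeval (fun _ : Fin n => (0 : K))).toRingHom
  let M := ((Tor (ModuleCat (MvPolynomial (Fin n) K)) i).obj
      (ModuleCat.of _ ((MvPolynomial (Fin n) K) ⧸ I))).obj (ModuleCat.of _ K)
  let _ : Module K M := Module.compHom M (MvPolynomial.C : K →+* MvPolynomial (Fin n) K)
  change Module.rank K M = 0 ↔ Limits.IsZero M
  rw [rank_zero_iff, ModuleCat.isZero_iff_subsingleton]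

variable (K : Type) [Field K] {n μ : ℕ} (m : Fin μ → Finset (Fin n))

/-- The Taylor coefficient modulo the variables: `1` if adding `j` to `S` does not change the lcm,
and `0` otherwise. -/
def tcK (j : Fin μ) (S : Finset (Fin μ)) : K := if m j ⊆ lcmSupp m S then 1 else 0

lemma eval_tc (j : Fin μ) (S : Finset (Fin μ)) :
    (MvPolynomial.aeval (fun _ : Fin n => (0 : K))).toRingHom (tc K m j S) = tcK K m j S := by
  simp only [tc, tcK, AlgHom.toRingHom_eq_coe, RingHom.coe_coe, map_prod, MvPolynomial.aeval_X]
  split_ifs with h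
  · rw [sdiff_eq_empty_iff_subset.2 h, prod_empty]
  · obtain ⟨i, hi⟩ := sdiff_nonempty.2 h
    exact prod_eq_zero hi rfl

lemma tcK_symm : CoeffSymm (tcK K m) := by
  intro S j l hj hl hjl
  simp only [← eval_tc, ← map_mul, tc_symm K m S j l hj hl hjl]

lemma dgr_exact (k : ℕ) : Function.Exact (dgr (tc K m) (k + 1)) (dgr (tc K m) k) :=
  (graded_exact_iff (tc_symm K m) k).2 fun F hF hD =>
    taylor_exact K m F hD (hF ∅ (by simp))

/-- The augmentation `Gr μ R 0 = R → R/I` of the Taylor complex. -/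
noncomputable def aug : Gr μ (MvPolynomial (Fin n) K) 0 →ₗ[MvPolynomial (Fin n) K]
    MvPolynomial (Fin n) K ⧸ sqIdeal K m :=
  (Submodule.mkQ (sqIdeal K m)).comp (LinearMap.proj ⟨∅, rfl⟩)

lemma aug_surjective : Function.Surjective (aug K m) := fun x => by
  obtain ⟨r, rfl⟩ := Submodule.mkQ_surjective _ x
  exact ⟨fun _ => r, rfl⟩

lemma aug_exact : Function.Exact (dgr (tc K m) 0) (aug K m) := by
  have hd : ∀ g : Gr μ (MvPolynomial (Fin n) K) 1, dgr (tc K m) 0 g ⟨∅, rfl⟩ =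
      ∑ j, g ⟨{j}, card_singleton j⟩ * sqMonomial K m j := fun g => by
    change D (tc K m) (ext0 g) ∅ = _
    simp only [D, compl_empty]
    refine sum_congr rfl fun j _ => ?_
    have h1 : sgn (MvPolynomial (Fin n) K) j ∅ = 1 := by simp [sgn]
    have h2 : tc K m j ∅ = sqMonomial K m j := by simp [tc, lcmSupp, sqMonomial]
    have h3 : ext0 g (insert j ∅) = g ⟨{j}, card_singleton j⟩ := dif_pos (card_singleton j)
    rw [h1, h2, h3]; ring
  intro f
  change Submodule.mkQ (sqIdeal K m) (f ⟨∅, rfl⟩) = 0 ↔ _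
  rw [Submodule.mkQ_apply, Submodule.Quotient.mk_eq_zero, sqIdeal,
    Ideal.mem_span_range_iff_exists_fun]
  constructor
  · rintro ⟨c, hc⟩
    refine ⟨fun S => ∑ j, if S.1 = {j} then c j else 0, ?_⟩
    funext ⟨S, hS⟩
    obtain rfl := card_eq_zero.1 hS
    rw [hd, ← hc]
    simp [Finset.singleton_inj]
  · rintro ⟨g, rfl⟩
    exact ⟨fun j => g ⟨{j}, card_singleton j⟩, (hd g).symm⟩

/-- If the complex with coefficients `c` resolves `M`, then `Torᵢ(M, K)`, with `K` an `A`-module via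
`φ`, is computed by the complex with coefficients `φ (c j S)`. -/
theorem tor_base_iff {A K : Type} [CommRing A] [CommRing K] (φ : A →+* K)
    {c : Fin μ → Finset (Fin μ) → A}
    (hd : ∀ k, Function.Exact (dgr c (k + 1)) (dgr c k)) {M : Type} [AddCommGroup M] [Module A M]
    (ε : Gr μ A 0 →ₗ[A] M) (hε : Function.Surjective ε) (hdε : Function.Exact (dgr c 0) ε)
    (k : ℕ) :
    letI : Module A K := Module.compHom K φ
    Limits.IsZero (((Tor (ModuleCat A) (k + 1)).obj (ModuleCat.of A M)).obj (ModuleCat.of A K)) ↔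
      Function.Exact (dgr (fun j S => φ (c j S)) (k + 1)) (dgr (fun j S => φ (c j S)) k) := by
  let _ : Module A K := Module.compHom K φ
  exact (tor_iff (ModuleCat.of A K) k (dgr c) hd ε hε hdε).trans (rTensor_exact_iff φ c k)

/-- The Betti number in degree `k + 1` vanishes iff the Taylor complex with its coefficients reduced
to `K` is exact there. -/
theorem betti_succ_eq_zero_iff (k : ℕ) :
    bettiNumber K (sqIdeal K m) (k + 1) = 0 ↔ ExAt (tcK K m) k := by
  rw [betti_eq_zero_iff]
  let _ : Module (MvPolynomial (Fin n) K) K :=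
    Module.compHom K (MvPolynomial.aeval (fun _ : Fin n => (0 : K))).toRingHom
  have h := tor_base_iff (MvPolynomial.aeval (fun _ : Fin n => (0 : K))).toRingHom
    (dgr_exact K m) (aug K m) (aug_surjective K m) (aug_exact K m) k
  simp only [eval_tc] at h
  exact h.trans (graded_exact_iff (tcK_symm K m) k)

/-- The Taylor resolution has length `μ`, so no Betti number beyond `μ` is nonzero. -/
theorem betti_bddAbove : BddAbove {i : ℕ | bettiNumber K (sqIdeal K m) i ≠ 0} := by
  refine ⟨μ, fun i hi => ?_⟩
  by_contra! hlt
  obtain ⟨k, rfl⟩ := Nat.exists_eq_succ_of_ne_zero (Nat.ne_zero_of_lt hlt)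
  refine hi ((betti_succ_eq_zero_iff K m k).2 fun F hF _ => ⟨0, ?_⟩)
  rw [D_zero]
  funext S
  refine (hF S fun hS => ?_).symm
  have := card_le_univ S
  rw [Fintype.card_fin] at this
  omega

variable {m} in
/-- Comparison of the reduced Taylor complexes. With the weight `#supp m_S`, a step `S ↦ S ∪ {j}`
preserving the weight has `m_j ∣ m_S`, i.e. every edge of `H(I)` through `j` meets `S`. The edges of
`H(I')` are among these, so also `m'_j ∣ m'_S`, and `filtration` applies. -/
theorem exAt_of_subset {n' : ℕ} {m' : Fin μ → Finset (Fin n')} (hsub : hgEdges m' ⊆ hgEdges m)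
    {k : ℕ} (h : ExAt (tcK K m) k) : ExAt (tcK K m') k := by
  have hmono : ∀ j S, lcmSupp m S ⊆ lcmSupp m (insert j S) := fun j S => by
    rw [lcmSupp_insert]; exact subset_union_right
  refine filtration (tcK_symm K m') (fun S => (lcmSupp m S).card)
    (fun j S => card_le_card (hmono j S)) ?_ ?_ k h
  · intro j S hw
    refine if_neg fun hs => hw ?_
    rw [lcmSupp_insert, union_eq_right.2 hs]
  · intro j S hw
    have hs : m j ⊆ lcmSupp m S := by
      rw [eq_of_subset_of_card_le (hmono j S) hw.le, lcmSupp_insert]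
      exact subset_union_left
    have hs' : m' j ⊆ lcmSupp m' S := by
      intro i' hi'
      obtain ⟨-, i, hi⟩ := hsub (show univ.filter (fun l => i' ∈ m' l) ∈ hgEdges m' from
        ⟨⟨j, by simpa using hi'⟩, i', rfl⟩)
      have hi : ∀ l, i' ∈ m' l ↔ i ∈ m l := fun l => by
        simpa using Finset.ext_iff.1 hi l
      obtain ⟨l, hl, hil⟩ := mem_biUnion.1 (hs ((hi j).1 hi'))
      exact mem_biUnion.2 ⟨l, hl, (hi l).2 hil⟩
    rw [tcK, tcK, if_pos hs, if_pos hs']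

end Final

end TaylorComplex

/-- Let `I ⊆ R` and `I' ⊆ R'` be square-free monomial ideals in
polynomial rings over the same field `K` (encoded by the supports of their minimal
generators: nonempty supports forming antichains), each with `μ` minimal generators and
with separated hypergraphs on the common vertex set `{1,…,μ}`.  If `H(I') ⊆ H(I)` as
sets of edges, then `pd(R'/I') ≤ pd(R/I)`. -/
theorem stmt14 (K : Type) [Field K] (μ n n' : ℕ) (hμ : 1 ≤ μ)
    (m : Fin μ → Finset (Fin n)) (m' : Fin μ → Finset (Fin n'))
    (hne : ∀ j, (m j).Nonempty) (hne' : ∀ j, (m' j).Nonempty)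
    (hmin : ∀ j k, j ≠ k → ¬ m j ⊆ m k) (hmin' : ∀ j k, j ≠ k → ¬ m' j ⊆ m' k)
    (hsep : SeparatedHG m) (hsep' : SeparatedHG m')
    (hsub : hgEdges m' ⊆ hgEdges m) :
    pdim K (sqIdeal K m') ≤ pdim K (sqIdeal K m) := by
  refine csSup_le' fun i hi => ?_
  cases i with
  | zero => exact Nat.zero_le _
  | succ k =>
    -- The supremum defining `pdim` runs over a bounded set, so it dominates each member.
    refine le_csSup (TaylorComplex.betti_bddAbove K m) fun h0 => hi ?_
    rw [TaylorComplex.betti_succ_eq_zero_iff] at h0 ⊢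
    exact TaylorComplex.exAt_of_subset K hsub h0
end
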